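/- arXiv:1207.6128 — 6 statements merged into one kernel-verified Lean document; each statement's English description precedes it below -/
import Mathlib

section
/- Let P ⊆ ℝⁿ be a convex body containing 0 in its interior and let g : ℝⁿ → (0,∞) be a smooth positive function. If φ : ℝⁿ → ℝ is a smooth convex function satisfying g(∇φ(x))·det D²φ(x) = e^{−φ(x)} for all x ∈ ℝⁿ and such that ∇φ is a diffeomorphism from ℝⁿ onto the interior of P, then 0 is the barycenter of the measure g(p)dp on P, i.e. ∫_P p·g(p) dp = 0 as a vector in ℝⁿ. -/
open scoped RealInnerProductSpace
open MeasureTheory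

/-- The determinant of the Hessian matrix `(∂²φ/∂x_i∂x_j)(x)`. -/
noncomputable def hessDet {n : ℕ} (φ : EuclideanSpace ℝ (Fin n) → ℝ)
    (x : EuclideanSpace ℝ (Fin n)) : ℝ :=
  Matrix.det (Matrix.of fun i j : Fin n =>
    iteratedFDeriv ℝ 2 φ x ![EuclideanSpace.single i 1, EuclideanSpace.single j 1])

/-- The gradient map of `φ` is a diffeomorphism from `ℝⁿ` onto `S`: a smooth
bijection onto `S` with smooth inverse. -/
def IsGradDiffeoOnto {n : ℕ} (φ : EuclideanSpace ℝ (Fin n) → ℝ)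
    (S : Set (EuclideanSpace ℝ (Fin n))) : Prop :=
  ContDiff ℝ (⊤ : ℕ∞) (gradient φ) ∧
  Function.Injective (gradient φ) ∧
  Set.range (gradient φ) = S ∧
  ∃ ψ : EuclideanSpace ℝ (Fin n) → EuclideanSpace ℝ (Fin n),
    ContDiffOn ℝ (⊤ : ℕ∞) ψ S ∧ ∀ x, ψ (gradient φ x) = x

/-!
The equation says that `∇φ` transports `e^{-φ} dx` to `g dp` on `P`. The barycenter of `g dp` is
therefore `∫ e^{-φ} ∇φ dx = -∫ ∇(e^{-φ}) dx`, which vanishes because an integrable function with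
integrable gradient has no boundary term at infinity.
-/

open scoped Gradient

section Gradient

variable {E : Type*} [NormedAddCommGroup E] [InnerProductSpace ℝ E] [CompleteSpace E]

theorem gradient_exp_neg {φ : E → ℝ} {x : E} (hφ : DifferentiableAt ℝ φ x) :
    ∇ (fun y => Real.exp (-φ y)) x = -(Real.exp (-φ x) • ∇ φ x) := by
  refine ext_inner_right ℝ fun v => ?_
  rw [inner_gradient_left, hφ.hasFDerivAt.fun_neg.exp.fderiv, inner_neg_left, real_inner_smul_left,
    inner_gradient_left]
  simp

theorem inner_fderiv_gradient_eq_iteratedFDeriv (φ : E → ℝ) (x u v : E) :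
    ⟪fderiv ℝ (∇ φ) x u, v⟫ = iteratedFDeriv ℝ 2 φ x ![u, v] := by
  have hcomp : fderiv ℝ φ = (InnerProductSpace.toDual ℝ E).toContinuousLinearEquiv ∘ ∇ φ :=
    toDual_comp_gradient.symm
  rw [iteratedFDeriv_two_apply, hcomp, ContinuousLinearEquiv.comp_fderiv]
  simp

theorem det_fderiv_gradient_eq_det_iteratedFDeriv {ι : Type*} [Fintype ι] [DecidableEq ι]
    (b : OrthonormalBasis ι ℝ E) (φ : E → ℝ) (x : E) :
    (fderiv ℝ (∇ φ) x).det =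
      Matrix.det (Matrix.of fun i j => iteratedFDeriv ℝ 2 φ x ![b i, b j]) := by
  rw [ContinuousLinearMap.det, ← LinearMap.det_toMatrix b.toBasis, ← Matrix.det_transpose]
  congr 1
  ext i j
  rw [Matrix.of_apply, ← inner_fderiv_gradient_eq_iteratedFDeriv, Matrix.transpose_apply,
    LinearMap.toMatrix_apply, OrthonormalBasis.coe_toBasis_repr_apply,
    OrthonormalBasis.repr_apply_apply, real_inner_comm, OrthonormalBasis.coe_toBasis]
  rfl

end Gradient

theorem det_fderiv_gradient_eq_hessDet {n : ℕ} (φ : EuclideanSpace ℝ (Fin n) → ℝ)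
    (x : EuclideanSpace ℝ (Fin n)) : (fderiv ℝ (∇ φ) x).det = hessDet φ x := by
  simpa only [hessDet, EuclideanSpace.basisFun_apply] using
    det_fderiv_gradient_eq_det_iteratedFDeriv (EuclideanSpace.basisFun (Fin n) ℝ) φ x

section ChangeOfVariables

variable {E F : Type*} [NormedAddCommGroup E] [NormedSpace ℝ E] [FiniteDimensional ℝ E]
  [MeasurableSpace E] [BorelSpace E] {μ : Measure E} [μ.IsAddHaarMeasure]
  [NormedAddCommGroup F] [NormedSpace ℝ F]
  {T : E → E} {T' : E → E →L[ℝ] E} {g ρ : E → ℝ}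

theorem integrableOn_range_smul_iff_of_abs_det_mul_eq (hT : ∀ x, HasFDerivAt T (T' x) x)
    (hinj : T.Injective) (hρ : ∀ x, |(T' x).det| * g (T x) = ρ x) (f : E → F) :
    IntegrableOn (fun p => g p • f p) (Set.range T) μ ↔ Integrable (fun x => ρ x • f (T x)) μ := by
  simp only [← Set.image_univ, integrableOn_image_iff_integrableOn_abs_det_fderiv_smul μ
    MeasurableSet.univ (fun x _ => (hT x).hasFDerivWithinAt) hinj.injOn, integrableOn_univ,
    smul_smul, hρ]

theorem setIntegral_range_smul_of_abs_det_mul_eq (hT : ∀ x, HasFDerivAt T (T' x) x)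
    (hinj : T.Injective) (hρ : ∀ x, |(T' x).det| * g (T x) = ρ x) (f : E → F) :
    ∫ p in Set.range T, g p • f p ∂μ = ∫ x, ρ x • f (T x) ∂μ := by
  simp only [← Set.image_univ, integral_image_eq_integral_abs_det_fderiv_smul μ
    MeasurableSet.univ (fun x _ => (hT x).hasFDerivWithinAt) hinj.injOn, setIntegral_univ,
    smul_smul, hρ]

end ChangeOfVariables

theorem integral_fderiv_apply_eq_zero {E F : Type*} [NormedAddCommGroup E] [NormedSpace ℝ E]
    [FiniteDimensional ℝ E] [MeasurableSpace E] [BorelSpace E] {μ : Measure E}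
    [μ.IsAddHaarMeasure] [NormedAddCommGroup F] [NormedSpace ℝ F] {f : E → F} {v : E}
    (hf : Differentiable ℝ f) (hint : Integrable f μ)
    (hint' : Integrable (fun x => fderiv ℝ f x v) μ) :
    ∫ x, fderiv ℝ f x v ∂μ = 0 := by
  have hparts := integral_smul_fderiv_eq_neg_fderiv_smul_of_integrable (μ := μ) (v := v)
    (f := fun _ => (1 : ℝ)) (g := f) (by simp) (by simpa using hint') (by simpa using hint)
    (by simp) (fun x _ => hf x)
  simpa using hparts

section InnerProductSpace

variable {E : Type*} [NormedAddCommGroup E] [InnerProductSpace ℝ E] [CompleteSpace E]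
  [FiniteDimensional ℝ E] [MeasurableSpace E] [BorelSpace E] {μ : Measure E}
  [μ.IsAddHaarMeasure]

theorem integral_gradient_eq_zero {f : E → ℝ} (hf : Differentiable ℝ f) (hint : Integrable f μ)
    (hgrad : Integrable (∇ f) μ) : ∫ x, ∇ f x ∂μ = 0 := by
  refine ext_inner_left ℝ fun v => ?_
  have hfderiv : ∀ x, ⟪v, ∇ f x⟫ = fderiv ℝ f x v := fun x => by
    rw [real_inner_comm, inner_gradient_left]
  have hint' : Integrable (fun x => fderiv ℝ f x v) μ := by
    simpa only [hfderiv] using hgrad.const_inner (𝕜 := ℝ) v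
  rw [inner_zero_right, ← integral_inner (𝕜 := ℝ) hgrad v]
  simpa only [hfderiv] using integral_fderiv_apply_eq_zero hf hint hint'

theorem integral_exp_neg_smul_gradient_eq_zero {φ : E → ℝ} (hφ : Differentiable ℝ φ)
    (hint : Integrable (fun x => Real.exp (-φ x)) μ)
    (hgrad : Integrable (fun x => Real.exp (-φ x) • ∇ φ x) μ) :
    ∫ x, Real.exp (-φ x) • ∇ φ x ∂μ = 0 := by
  have hgradient : ∇ (fun x => Real.exp (-φ x)) = fun x => -(Real.exp (-φ x) • ∇ φ x) :=
    funext fun x => gradient_exp_neg (hφ x)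
  have hzero := integral_gradient_eq_zero hφ.fun_neg.exp hint (hgradient ▸ hgrad.neg)
  rwa [hgradient, integral_neg, neg_eq_zero] at hzero

theorem statement1_general {P : Set E} {g φ : E → ℝ} (hg : ∀ p, 0 ≤ g p)
    (hgint : IntegrableOn g P μ) (hgpint : IntegrableOn (fun p => g p • p) P μ)
    (hφ : Differentiable ℝ φ) (hgrad : Differentiable ℝ (∇ φ))
    (hMA : ∀ x, g (∇ φ x) * (fderiv ℝ (∇ φ) x).det = Real.exp (-φ x))
    (hinj : (∇ φ).Injective) (hrange : Set.range (∇ φ) =ᵐ[μ] P) :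
    ∫ p in P, g p • p ∂μ = 0 := by
  have hderiv x : HasFDerivAt (∇ φ) (fderiv ℝ (∇ φ) x) x := (hgrad x).hasFDerivAt
  have hdensity x : |(fderiv ℝ (∇ φ) x).det| * g (∇ φ x) = Real.exp (-φ x) := by
    have hdet : 0 < (fderiv ℝ (∇ φ) x).det :=
      pos_of_mul_pos_right (hMA x ▸ Real.exp_pos (-φ x)) (hg _)
    rw [abs_of_pos hdet, mul_comm, hMA]
  have hexp : Integrable (fun x => Real.exp (-φ x)) μ := by
    simpa using (integrableOn_range_smul_iff_of_abs_det_mul_eq hderiv hinj hdensity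
      fun _ => (1 : ℝ)).1 (by simpa using hgint.congr_set_ae hrange)
  have hexpgrad : Integrable (fun x => Real.exp (-φ x) • ∇ φ x) μ :=
    (integrableOn_range_smul_iff_of_abs_det_mul_eq hderiv hinj hdensity id).1
      (hgpint.congr_set_ae hrange)
  calc ∫ p in P, g p • p ∂μ
      = ∫ p in Set.range (∇ φ), g p • p ∂μ := (setIntegral_congr_set hrange).symm
    _ = ∫ x, Real.exp (-φ x) • ∇ φ x ∂μ :=
        setIntegral_range_smul_of_abs_det_mul_eq hderiv hinj hdensity id
    _ = 0 := integral_exp_neg_smul_gradient_eq_zero hφ hexp hexpgrad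

end InnerProductSpace

/-- If `φ` is a smooth convex solution of
`g(∇φ) det D²φ = e^{-φ}` whose gradient is a diffeomorphism onto the interior
of the convex body `P`, then `0` is the barycenter of the measure `g(p)dp`
on `P`. -/
theorem statement1 {n : ℕ} (P : Set (EuclideanSpace ℝ (Fin n)))
    (hPcomp : IsCompact P) (hPconv : Convex ℝ P)
    (h0 : (0 : EuclideanSpace ℝ (Fin n)) ∈ interior P)
    (g : EuclideanSpace ℝ (Fin n) → ℝ)
    (hg : ContDiff ℝ (⊤ : ℕ∞) g) (hgpos : ∀ p, 0 < g p)
    (φ : EuclideanSpace ℝ (Fin n) → ℝ)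
    (hφsm : ContDiff ℝ (⊤ : ℕ∞) φ) (hφconv : ConvexOn ℝ Set.univ φ)
    (hMA : ∀ x, g (gradient φ x) * hessDet φ x = Real.exp (-φ x))
    (hdiffeo : IsGradDiffeoOnto φ (interior P)) :
    (∫ p in P, g p • p) = 0 := by
  obtain ⟨hG, hinj, hrange, -⟩ := hdiffeo
  have hrange_ae : Set.range (∇ φ) =ᵐ[volume] P :=
    hrange ▸ interior_ae_eq_of_null_frontier (hPconv.addHaar_frontier volume)
  exact statement1_general (fun p => (hgpos p).le)
    (hg.continuous.continuousOn.integrableOn_compact hPcomp)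
    ((hg.continuous.smul continuous_id).continuousOn.integrableOn_compact hPcomp)
    (hφsm.differentiable (by simp)) (hG.differentiable (by simp))
    (fun x => by rw [det_fderiv_gradient_eq_hessDet, hMA]) hinj hrange_ae
end

section
/- Let P ⊆ ℝⁿ be a convex body containing 0 in its interior and let g : ℝⁿ → (0,∞) be a smooth positive function. If φ₀ and φ₁ are two smooth convex functions on ℝⁿ, each satisfying g(∇φ_i(x))·det D²φ_i(x) = e^{−φ_i(x)} for all x ∈ ℝⁿ and such that ∇φ_i is a diffeomorphism from ℝⁿ onto the interior of P, then there exists a vector a ∈ ℝⁿ such that φ₁(x) = φ₀(x + a) for all x ∈ ℝⁿ. -/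
open scoped RealInnerProductSpace
open MeasureTheory

/-! Put `T = (∇φ₁)⁻¹ ∘ ∇φ₀`. Differentiating `∇φ₁ ∘ T = ∇φ₀` gives `D²φ₁(Tx) ∘ DT(x) = D²φ₀(x)`, so
the two equations yield `log det DT = φ₁ ∘ T - φ₀`, and `DT` is similar to a positive definite map,
so that the inequality `log t ≤ t - 1` on its eigenvalues gives `log det DT ≤ tr DT - n`, with
equality only for `DT = id`. Writing `Lφ(x) = ⟪∇φ(x), x⟫ - φ(x)`, one computes
`div (e^{-φ₀} (T - id)) = e^{-φ₀} (tr DT - n - log det DT) + e^{-φ₀} (Lφ₀ - Lφ₁ ∘ T)`.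
A convex function with `0` interior to the range of its gradient grows linearly, so everything is
integrable and the divergence integrates to `0`. As `T` carries `e^{-φ₀} dx` to `e^{-φ₁} dx`, the
defect in the determinant inequality has integral `∫ Lφ₁ e^{-φ₁} - ∫ Lφ₀ e^{-φ₀}`. Exchanging `φ₀`
and `φ₁` changes the sign of this number, while both defects are nonnegative: they vanish, `DT` is
the identity everywhere, `T` is a translation and `φ₁ ∘ T = φ₀`. -/

section LinearAlgebra

variable {ι : Type*} [Fintype ι] [DecidableEq ι] {A M N : Matrix ι ι ℝ}

lemma log_det_eq_sum_log_eigenvalues (hN : N.PosDef) :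
    Real.log N.det = ∑ i, Real.log (hN.1.eigenvalues i) := by
  rw [hN.1.det_eq_prod_eigenvalues]
  exact Real.log_prod fun i _ => (hN.eigenvalues_pos i).ne'

lemma trace_sub_card_eq_sum_eigenvalues_sub_one (hN : N.IsHermitian) :
    N.trace - Fintype.card ι = ∑ i, (hN.eigenvalues i - 1) := by
  rw [hN.trace_eq_sum_eigenvalues]
  simp

lemma log_det_le_trace_sub_card (hN : N.PosDef) :
    Real.log N.det ≤ N.trace - Fintype.card ι := by
  rw [log_det_eq_sum_log_eigenvalues hN, trace_sub_card_eq_sum_eigenvalues_sub_one hN.1]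
  exact Finset.sum_le_sum fun i _ => Real.log_le_sub_one_of_pos (hN.eigenvalues_pos i)

lemma eq_one_of_log_det_eq_trace_sub_card (hN : N.PosDef)
    (h : Real.log N.det = N.trace - Fintype.card ι) : N = 1 := by
  rw [log_det_eq_sum_log_eigenvalues hN, trace_sub_card_eq_sum_eigenvalues_sub_one hN.1,
    Finset.sum_eq_sum_iff_of_le
      fun i _ => Real.log_le_sub_one_of_pos (hN.eigenvalues_pos i)] at h
  have eigenvalues_eq_one : hN.1.eigenvalues = fun _ => 1 := by
    funext i
    by_contra hne
    exact (Real.log_lt_sub_one_of_pos (hN.eigenvalues_pos i) hne).ne (h i (Finset.mem_univ i))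
  rw [hN.1.spectral_theorem, eigenvalues_eq_one]
  simp

open scoped MatrixOrder Matrix.Norms.L2Operator in
lemma exists_units_inv_eq_conjTranspose_mul_self (hA : A.PosDef) :
    ∃ C : (Matrix ι ι ℝ)ˣ, A⁻¹ = (C : Matrix ι ι ℝ).conjTranspose * C := by
  obtain ⟨C, hC⟩ := CStarAlgebra.nonneg_iff_eq_star_mul_self.mp hA.inv.posSemidef.nonneg
  have hCunit : IsUnit C := isUnit_of_mul_isUnit_right (hC ▸ hA.inv.isUnit)
  exact ⟨hCunit.unit, hC⟩

/- With `A⁻¹ = Cᴴ C` one has `M = Cᴴ (C (A M) Cᴴ) (Cᴴ)⁻¹`. -/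
lemma exists_posDef_units_conj (hA : A.PosDef) (hAM : (A * M).PosDef) :
    ∃ (U : (Matrix ι ι ℝ)ˣ) (N : Matrix ι ι ℝ),
      N.PosDef ∧ M = (U : Matrix ι ι ℝ) * N * (↑U⁻¹ : Matrix ι ι ℝ) := by
  obtain ⟨C, hC⟩ := exists_units_inv_eq_conjTranspose_mul_self hA
  refine ⟨star C, C * (A * M) * (C : Matrix ι ι ℝ).conjTranspose,
    hAM.mul_mul_conjTranspose_same (Matrix.vecMul_injective_of_isUnit C.isUnit), ?_⟩
  have hM : M = A⁻¹ * (A * M) := by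
    rw [Matrix.nonsing_inv_mul_cancel_left _ _ ((Matrix.isUnit_iff_isUnit_det _).1 hA.isUnit)]
  rw [Units.eq_mul_inv_iff_mul_eq, Units.coe_star, Matrix.star_eq_conjTranspose]
  nth_rw 1 [hM]
  simp only [hC, mul_assoc]

lemma log_det_le_trace_sub_card_of_posDef_mul (hA : A.PosDef) (hAM : (A * M).PosDef) :
    Real.log M.det ≤ M.trace - Fintype.card ι := by
  obtain ⟨U, N, hN, rfl⟩ := exists_posDef_units_conj hA hAM
  rw [Matrix.det_units_conj, Matrix.trace_units_conj]
  exact log_det_le_trace_sub_card hN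

lemma eq_one_of_log_det_eq_trace_sub_card_of_posDef_mul (hA : A.PosDef) (hAM : (A * M).PosDef)
    (h : Real.log M.det = M.trace - Fintype.card ι) : M = 1 := by
  obtain ⟨U, N, hN, rfl⟩ := exists_posDef_units_conj hA hAM
  rw [Matrix.det_units_conj, Matrix.trace_units_conj] at h
  rw [eq_one_of_log_det_eq_trace_sub_card hN h, mul_one, Units.mul_inv]

variable {E : Type*} [NormedAddCommGroup E] [InnerProductSpace ℝ E] {S T : E →ₗ[ℝ] E}

lemma posDef_toMatrix (b : OrthonormalBasis ι ℝ E) (hT : T.IsPositive)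
    (hdet : LinearMap.det T ≠ 0) : (T.toMatrix b.toBasis b.toBasis).PosDef := by
  rwa [((LinearMap.posSemidef_toMatrix_iff b).2 hT).posDef_iff_det_ne_zero, LinearMap.det_toMatrix]

lemma posDef_toMatrix_mul_toMatrix (b : OrthonormalBasis ι ℝ E) (hST : (S ∘ₗ T).IsPositive)
    (hdet : LinearMap.det (S ∘ₗ T) ≠ 0) :
    (S.toMatrix b.toBasis b.toBasis * T.toMatrix b.toBasis b.toBasis).PosDef := by
  rw [← LinearMap.toMatrix_comp]
  exact posDef_toMatrix b hST hdet

variable [FiniteDimensional ℝ E]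

theorem log_det_le_trace_sub_finrank (hS : S.IsPositive) (hST : (S ∘ₗ T).IsPositive)
    (hdet : LinearMap.det (S ∘ₗ T) ≠ 0) :
    Real.log (LinearMap.det T) ≤ LinearMap.trace ℝ E T - Module.finrank ℝ E := by
  let b := stdOrthonormalBasis ℝ E
  have hdetS : LinearMap.det S ≠ 0 := left_ne_zero_of_mul (LinearMap.det_comp S T ▸ hdet)
  simpa [LinearMap.det_toMatrix, ← LinearMap.trace_eq_matrix_trace] using
    log_det_le_trace_sub_card_of_posDef_mul (posDef_toMatrix b hS hdetS)
      (posDef_toMatrix_mul_toMatrix b hST hdet)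

theorem eq_id_of_log_det_eq_trace_sub_finrank (hS : S.IsPositive) (hST : (S ∘ₗ T).IsPositive)
    (hdet : LinearMap.det (S ∘ₗ T) ≠ 0)
    (h : Real.log (LinearMap.det T) = LinearMap.trace ℝ E T - Module.finrank ℝ E) :
    T = LinearMap.id := by
  let b := stdOrthonormalBasis ℝ E
  have hdetS : LinearMap.det S ≠ 0 := left_ne_zero_of_mul (LinearMap.det_comp S T ▸ hdet)
  have hmatrix : T.toMatrix b.toBasis b.toBasis = 1 := by
    apply eq_one_of_log_det_eq_trace_sub_card_of_posDef_mul (posDef_toMatrix b hS hdetS)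
      (posDef_toMatrix_mul_toMatrix b hST hdet)
    simpa [LinearMap.det_toMatrix, ← LinearMap.trace_eq_matrix_trace] using h
  rwa [← LinearMap.toMatrix_id b.toBasis, EmbeddingLike.apply_eq_iff_eq] at hmatrix

end LinearAlgebra

section CutoffSequence

open Filter Topology

variable {E : Type*} [NormedAddCommGroup E] [NormedSpace ℝ E]

/-- A sequence of `C¹` compactly supported functions with values in `[0, 1]` that exhausts the
space (it tends pointwise to `1`) with uniformly vanishing derivatives. -/
structure IsCutoffSequence (c : ℕ → E → ℝ) : Prop where
  contDiff (k : ℕ) : ContDiff ℝ 1 (c k)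
  hasCompactSupport (k : ℕ) : HasCompactSupport (c k)
  nonneg (k : ℕ) (x : E) : 0 ≤ c k x
  le_one (k : ℕ) (x : E) : c k x ≤ 1
  tendsto_one (x : E) : Tendsto (fun k => c k x) atTop (𝓝 1)
  exists_norm_fderiv_le : ∃ δ : ℕ → ℝ, Tendsto δ atTop (𝓝 0) ∧ ∀ k x, ‖fderiv ℝ (c k) x‖ ≤ δ k

lemma exists_isCutoffSequence (E : Type*) [NormedAddCommGroup E] [NormedSpace ℝ E]
    [FiniteDimensional ℝ E] : ∃ c : ℕ → E → ℝ, IsCutoffSequence c := by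
  let b : ContDiffBump (0 : E) := ⟨1, 2, one_pos, one_lt_two⟩
  obtain ⟨K, hK⟩ : ∃ K, ∀ x, ‖fderiv ℝ b x‖ ≤ K :=
    (b.hasCompactSupport.fderiv ℝ).exists_bound_of_continuous
      (b.contDiff.continuous_fderiv one_ne_zero)
  have scale_pos (k : ℕ) : 0 < 1 / ((k : ℝ) + 1) := by positivity
  have scale_tendsto := tendsto_one_div_add_atTop_nhds_zero_nat (𝕜 := ℝ)
  refine ⟨fun k x => b ((1 / ((k : ℝ) + 1)) • x), {
    contDiff := fun k => b.contDiff.comp (contDiff_const_smul _)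
    hasCompactSupport := fun k => b.hasCompactSupport.comp_smul (scale_pos k).ne'
    nonneg := fun k x => b.nonneg
    le_one := fun k x => b.le_one
    tendsto_one := fun x => ?_
    exists_norm_fderiv_le := ⟨fun k => 1 / ((k : ℝ) + 1) * K, ?_, fun k x => ?_⟩ }⟩
  · have b_zero : b ((0 : ℝ) • x) = 1 := b.one_of_mem_closedBall (by simp [b])
    simpa only [b_zero, Function.comp_def] using
      (b.continuous.tendsto _).comp (scale_tendsto.smul_const x)
  · simpa using scale_tendsto.mul_const K
  · rw [fderiv_comp_smul, norm_smul, Real.norm_of_nonneg (scale_pos k).le]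
    exact mul_le_mul_of_nonneg_left (hK _) (scale_pos k).le

namespace IsCutoffSequence

variable {c : ℕ → E → ℝ} (hc : IsCutoffSequence c)
include hc

lemma norm_mul_le (k : ℕ) (x : E) (r : ℝ) : ‖c k x * r‖ ≤ ‖r‖ := by
  rw [norm_mul, Real.norm_of_nonneg (hc.nonneg k x)]
  exact mul_le_of_le_one_left (norm_nonneg r) (hc.le_one k x)

variable [MeasurableSpace E] {μ : Measure E} {f : E → ℝ}

lemma tendsto_integral_fderiv_apply {Y : E → E} (hY : Integrable Y μ) :
    Tendsto (fun k => ∫ x, fderiv ℝ (c k) x (Y x) ∂μ) atTop (𝓝 0) := by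
  obtain ⟨δ, hδ, hcδ⟩ := hc.exists_norm_fderiv_le
  refine squeeze_zero_norm (a := fun k => δ k * ∫ x, ‖Y x‖ ∂μ) (fun k => ?_)
    (by simpa using hδ.mul_const (∫ x, ‖Y x‖ ∂μ))
  rw [← integral_const_mul]
  exact norm_integral_le_of_norm_le (hY.norm.const_mul (δ k)) (.of_forall fun x =>
    (fderiv ℝ (c k) x).le_of_opNorm_le (hcδ k x) (Y x))

variable [BorelSpace E]

lemma integrable_mul (hf : Integrable f μ) (k : ℕ) : Integrable (fun x => c k x * f x) μ :=
  hf.mono ((hc.contDiff k).continuous.aestronglyMeasurable.mul hf.aestronglyMeasurable)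
    (.of_forall fun x => hc.norm_mul_le k x (f x))

lemma tendsto_integral_mul (hf : Integrable f μ) :
    Tendsto (fun k => ∫ x, c k x * f x ∂μ) atTop (𝓝 (∫ x, f x ∂μ)) :=
  tendsto_integral_of_dominated_convergence (fun x => ‖f x‖)
    (fun k => (hc.integrable_mul hf k).aestronglyMeasurable) hf.norm
    (fun k => .of_forall fun x => hc.norm_mul_le k x (f x))
    (.of_forall fun x => by simpa using (hc.tendsto_one x).mul_const (f x))

lemma integrable_of_nonneg_of_tendsto [IsFiniteMeasureOnCompacts μ] (hf : Continuous f)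
    (hf0 : ∀ x, 0 ≤ f x) {l : ℝ}
    (hl : Tendsto (fun k => ∫ x, c k x * f x ∂μ) atTop (𝓝 l)) : Integrable f μ := by
  have mul_continuous (k : ℕ) : Continuous fun x => c k x * f x :=
    (hc.contDiff k).continuous.mul hf
  have lintegral_eq (k : ℕ) :
      ∫⁻ x, ‖c k x * f x‖ₑ ∂μ = ENNReal.ofReal (∫ x, c k x * f x ∂μ) := by
    rw [ofReal_integral_eq_lintegral_ofReal
      ((mul_continuous k).integrable_of_hasCompactSupport (hc.hasCompactSupport k).mul_right)
      (.of_forall fun x => mul_nonneg (hc.nonneg k x) (hf0 x))]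
    exact lintegral_congr fun x =>
      Real.enorm_of_nonneg (mul_nonneg (hc.nonneg k x) (hf0 x))
  refine ⟨hf.aestronglyMeasurable, lt_of_le_of_lt ?_ (ENNReal.ofReal_lt_top (r := l))⟩
  calc ∫⁻ x, ‖f x‖ₑ ∂μ = ∫⁻ x, liminf (fun k => ‖c k x * f x‖ₑ) atTop ∂μ :=
        lintegral_congr fun x => by
          simpa using ((hc.tendsto_one x).mul_const (f x)).enorm.liminf_eq.symm
    _ ≤ liminf (fun k => ∫⁻ x, ‖c k x * f x‖ₑ ∂μ) atTop :=
        lintegral_liminf_le fun k => (mul_continuous k).enorm.measurable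
    _ = ENNReal.ofReal l := by
        simp only [lintegral_eq]
        exact (ENNReal.tendsto_ofReal hl).liminf_eq

end IsCutoffSequence

end CutoffSequence

section Divergence

open Filter Topology

variable {E : Type*} [NormedAddCommGroup E] [NormedSpace ℝ E]

/-- The divergence of a vector field `Y`, that is, the trace of its derivative; it is `0` at points
where `Y` is not differentiable. -/
noncomputable def divergence (Y : E → E) (x : E) : ℝ :=
  LinearMap.trace ℝ E (fderiv ℝ Y x)

variable [FiniteDimensional ℝ E] {Y : E → E} {f : E → ℝ}

lemma divergence_smul {x : E} (hf : DifferentiableAt ℝ f x) (hY : DifferentiableAt ℝ Y x) :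
    divergence (fun x => f x • Y x) x = f x * divergence Y x + fderiv ℝ f x (Y x) := by
  rw [divergence, fderiv_fun_smul hf hY, ContinuousLinearMap.toLinearMap_add,
    ContinuousLinearMap.toLinearMap_smul, map_add, map_smul, smul_eq_mul]
  congr 1
  exact LinearMap.trace_smulRight _ _

lemma divergence_sub_id {x : E} (hY : DifferentiableAt ℝ Y x) :
    divergence (fun x => Y x - x) x = divergence Y x - Module.finrank ℝ E := by
  rw [divergence, fderiv_fun_sub hY differentiableAt_fun_id, fderiv_fun_id,
    ContinuousLinearMap.toLinearMap_sub, map_sub, ContinuousLinearMap.coe_id, LinearMap.trace_id,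
    divergence]

/-- The trace as a continuous linear functional on the operators of a finite-dimensional space. -/
noncomputable def traceCLM (E : Type*) [NormedAddCommGroup E] [NormedSpace ℝ E]
    [FiniteDimensional ℝ E] : (E →L[ℝ] E) →L[ℝ] ℝ :=
  (LinearMap.trace ℝ E ∘ₗ ContinuousLinearMap.coeLM ℝ).toContinuousLinearMap

lemma traceCLM_fderiv (Y : E → E) (x : E) : traceCLM E (fderiv ℝ Y x) = divergence Y x := rfl

lemma continuous_divergence (hY : ContDiff ℝ 1 Y) : Continuous (divergence Y) :=
  (traceCLM E).continuous.comp (hY.continuous_fderiv one_ne_zero)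

variable [MeasurableSpace E] [BorelSpace E] {μ : Measure E} [μ.IsAddHaarMeasure]

lemma integral_fderiv_eq_zero (hY : ContDiff ℝ 1 Y) (hYsupp : HasCompactSupport Y) :
    ∫ x, fderiv ℝ Y x ∂μ = 0 := by
  have fderiv_integrable : Integrable (fderiv ℝ Y) μ :=
    (hY.continuous_fderiv one_ne_zero).integrable_of_hasCompactSupport (hYsupp.fderiv ℝ)
  ext v
  rw [ContinuousLinearMap.integral_apply fderiv_integrable]
  simpa using integral_smul_fderiv_eq_neg_fderiv_smul_of_integrable (μ := μ)
    (f := fun _ : E => (1 : ℝ)) (g := Y) (v := v) (by simp)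
    (by simpa using fderiv_integrable.apply_continuousLinearMap v)
    (by simpa using hY.continuous.integrable_of_hasCompactSupport hYsupp)
    (fun x _ => differentiableAt_const 1) (fun x _ => hY.differentiable one_ne_zero x)

lemma integral_divergence_eq_zero_of_hasCompactSupport (hY : ContDiff ℝ 1 Y)
    (hYsupp : HasCompactSupport Y) : ∫ x, divergence Y x ∂μ = 0 := by
  have fderiv_integrable : Integrable (fderiv ℝ Y) μ :=
    (hY.continuous_fderiv one_ne_zero).integrable_of_hasCompactSupport (hYsupp.fderiv ℝ)
  simp only [← traceCLM_fderiv]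
  rw [(traceCLM E).integral_comp_comm fderiv_integrable,
    integral_fderiv_eq_zero hY hYsupp, map_zero]

lemma integral_mul_divergence_eq_neg (hf : ContDiff ℝ 1 f) (hfsupp : HasCompactSupport f)
    (hY : ContDiff ℝ 1 Y) :
    ∫ x, f x * divergence Y x ∂μ = -∫ x, fderiv ℝ f x (Y x) ∂μ := by
  have mul_integrable : Integrable (fun x => f x * divergence Y x) μ :=
    (hf.continuous.mul (continuous_divergence hY)).integrable_of_hasCompactSupport
      hfsupp.mul_right
  have fderiv_integrable : Integrable (fun x => fderiv ℝ f x (Y x)) μ :=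
    ((hf.continuous_fderiv one_ne_zero).clm_apply hY.continuous).integrable_of_hasCompactSupport
      ((hfsupp.fderiv ℝ).mono' fun x hx => subset_closure fun h => hx (by simp [h]))
  have integral_zero := integral_divergence_eq_zero_of_hasCompactSupport (μ := μ) (hf.smul hY)
    hfsupp.smul_right
  rw [eq_neg_iff_add_eq_zero, ← integral_add mul_integrable fderiv_integrable, ← integral_zero]
  exact integral_congr_ae <| .of_forall fun x => (divergence_smul
    (hf.differentiable one_ne_zero x) (hY.differentiable one_ne_zero x)).symm

theorem integral_divergence_eq_zero (hY : ContDiff ℝ 1 Y) (hYint : Integrable Y μ)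
    (hdiv : Integrable (divergence Y) μ) : ∫ x, divergence Y x ∂μ = 0 := by
  obtain ⟨c, hc⟩ := exists_isCutoffSequence E
  refine tendsto_nhds_unique (hc.tendsto_integral_mul hdiv) ?_
  simp only [integral_mul_divergence_eq_neg (hc.contDiff _) (hc.hasCompactSupport _) hY]
  simpa using (hc.tendsto_integral_fderiv_apply hYint).neg

theorem integrable_divergence_of_le (hY : ContDiff ℝ 1 Y) (hYint : Integrable Y μ)
    (hf : Continuous f) (hfint : Integrable f μ) (hle : ∀ x, f x ≤ divergence Y x) :
    Integrable (divergence Y) μ := by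
  obtain ⟨c, hc⟩ := exists_isCutoffSequence E
  have integral_mul_sub (k : ℕ) : ∫ x, c k x * (divergence Y x - f x) ∂μ =
      -∫ x, fderiv ℝ (c k) x (Y x) ∂μ - ∫ x, c k x * f x ∂μ := by
    have mul_divergence_integrable : Integrable (fun x => c k x * divergence Y x) μ :=
      ((hc.contDiff k).continuous.mul
        (continuous_divergence hY)).integrable_of_hasCompactSupport
        (hc.hasCompactSupport k).mul_right
    simp only [mul_sub]
    rw [integral_sub mul_divergence_integrable (hc.integrable_mul hfint k),
      integral_mul_divergence_eq_neg (hc.contDiff k) (hc.hasCompactSupport k) hY]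
  have sub_integrable : Integrable (fun x => divergence Y x - f x) μ := by
    refine hc.integrable_of_nonneg_of_tendsto ((continuous_divergence hY).sub hf)
      (fun x => sub_nonneg.2 (hle x)) (l := -0 - ∫ x, f x ∂μ) ?_
    simp only [integral_mul_sub]
    exact (hc.tendsto_integral_fderiv_apply hYint).neg.sub (hc.tendsto_integral_mul hfint)
  simpa only [Pi.add_def, sub_add_cancel] using sub_integrable.add hfint

end Divergence

section LinearGrowth

variable {E : Type*} [NormedAddCommGroup E]

/-- The function `φ` grows at least linearly in the norm. -/
def HasLinearGrowth (φ : E → ℝ) : Prop :=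
  ∃ ε > 0, ∃ C, ∀ x, ε * ‖x‖ - C ≤ φ x

lemma HasLinearGrowth.const_mul {φ : E → ℝ} (hφ : HasLinearGrowth φ) {r : ℝ} (hr : 0 < r) :
    HasLinearGrowth fun x => r * φ x := by
  obtain ⟨ε, hε, C, h⟩ := hφ
  refine ⟨r * ε, mul_pos hr hε, r * C, fun x => ?_⟩
  rw [mul_assoc, ← mul_sub]
  exact mul_le_mul_of_nonneg_left (h x) hr.le

lemma HasLinearGrowth.exists_le {φ : E → ℝ} (hφ : HasLinearGrowth φ) :
    ∃ C ≥ 0, ∀ x, -C ≤ φ x := by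
  obtain ⟨ε, hε, C, h⟩ := hφ
  refine ⟨|C|, abs_nonneg C, fun x => ?_⟩
  linarith [h x, mul_nonneg hε.le (norm_nonneg x), le_abs_self C]

variable [NormedSpace ℝ E] [FiniteDimensional ℝ E] [MeasurableSpace E] [BorelSpace E]
  {μ : Measure E} [μ.IsAddHaarMeasure]

lemma integrable_exp_neg_mul_norm {ε : ℝ} (hε : 0 < ε) :
    Integrable (fun x : E => Real.exp (-(ε * ‖x‖))) μ := by
  let d := Module.finrank ℝ E + 1
  have power_integrable : Integrable (fun x : E => (1 + ‖x‖) ^ (-(d : ℝ))) μ :=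
    integrable_one_add_norm (by simp [d])
  refine (power_integrable.const_mul (Real.exp ε * d.factorial / ε ^ d)).mono' (by fun_prop)
    (.of_forall fun x => ?_)
  have pow_le_exp := Real.pow_div_factorial_le_exp (ε * (1 + ‖x‖)) (by positivity) d
  rw [Real.norm_of_nonneg (Real.exp_pos _).le, Real.rpow_neg (by positivity), Real.rpow_natCast]
  calc Real.exp (-(ε * ‖x‖)) = Real.exp ε * (Real.exp (ε * (1 + ‖x‖)))⁻¹ := by
        rw [← Real.exp_neg, ← Real.exp_add]
        ring_nf
    _ ≤ Real.exp ε * ((ε * (1 + ‖x‖)) ^ d / d.factorial)⁻¹ := by gcongr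
    _ = Real.exp ε * d.factorial / ε ^ d * ((1 + ‖x‖) ^ d)⁻¹ := by
        rw [mul_pow]
        field_simp

namespace HasLinearGrowth

variable {φ : E → ℝ} (hφ : HasLinearGrowth φ) (hcont : Continuous φ)
include hφ hcont

lemma integrable_exp_neg : Integrable (fun x => Real.exp (-φ x)) μ := by
  obtain ⟨ε, hε, C, h⟩ := hφ
  refine ((integrable_exp_neg_mul_norm hε).const_mul (Real.exp C)).mono' (by fun_prop)
    (.of_forall fun x => ?_)
  rw [Real.norm_of_nonneg (Real.exp_pos _).le, ← Real.exp_add, Real.exp_le_exp]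
  linarith [h x]

lemma integrable_exp_neg_mul_self : Integrable (fun x => Real.exp (-φ x) * φ x) μ := by
  obtain ⟨C, hC, hle⟩ := hφ.exists_le
  have half_integrable : Integrable (fun x => Real.exp (-(2⁻¹ * φ x))) μ :=
    (hφ.const_mul (by norm_num)).integrable_exp_neg (by fun_prop)
  refine ((half_integrable.const_mul 2).add
    ((hφ.integrable_exp_neg hcont).const_mul (2 * C))).mono' (by fun_prop)
    (.of_forall fun x => ?_)
  have abs_le_exp : |φ x| ≤ 2 * Real.exp (2⁻¹ * φ x) + 2 * C := by
    have := Real.add_one_le_exp (2⁻¹ * φ x)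
    rw [abs_le]
    constructor <;> linarith [hle x, Real.exp_pos (2⁻¹ * φ x)]
  rw [norm_mul, Real.norm_of_nonneg (Real.exp_pos _).le, Real.norm_eq_abs]
  calc Real.exp (-φ x) * |φ x| ≤ Real.exp (-φ x) * (2 * Real.exp (2⁻¹ * φ x) + 2 * C) := by gcongr
    _ = 2 * Real.exp (-φ x + 2⁻¹ * φ x) + 2 * C * Real.exp (-φ x) := by
        rw [Real.exp_add]
        ring
    _ = 2 * Real.exp (-(2⁻¹ * φ x)) + 2 * C * Real.exp (-φ x) := by ring_nf

lemma integrable_exp_neg_smul_id : Integrable (fun x => Real.exp (-φ x) • x) μ := by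
  have mul_self_integrable := hφ.integrable_exp_neg_mul_self hcont (μ := μ)
  have exp_integrable := hφ.integrable_exp_neg hcont (μ := μ)
  obtain ⟨ε, hε, C, h⟩ := hφ
  refine ((mul_self_integrable.add (exp_integrable.const_mul C)).const_mul ε⁻¹).mono'
    (by fun_prop) (.of_forall fun x => ?_)
  rw [norm_smul, Real.norm_of_nonneg (Real.exp_pos _).le, Pi.add_apply, le_inv_mul_iff₀ hε]
  nlinarith [h x, Real.exp_pos (-φ x)]

end HasLinearGrowth

end LinearGrowth

section Gradient

open scoped Gradient

lemma hasDerivAt_comp_lineMap {E F : Type*} [NormedAddCommGroup E] [NormedSpace ℝ E]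
    [NormedAddCommGroup F] [NormedSpace ℝ F] {f : E → F} {x : E} (hf : DifferentiableAt ℝ f x)
    (y : E) : HasDerivAt (fun t : ℝ => f (AffineMap.lineMap x y t)) (fderiv ℝ f x (y - x)) 0 :=
  HasFDerivAt.comp_hasDerivAt 0 (by simpa using hf.hasFDerivAt) AffineMap.hasDerivAt_lineMap

variable {E : Type*} [NormedAddCommGroup E] [InnerProductSpace ℝ E] [CompleteSpace E]
  {φ : E → ℝ} {p x : E}

lemma gradient_eq_toDual_symm_comp_fderiv (φ : E → ℝ) :
    ∇ φ = (InnerProductSpace.toDual ℝ E).symm.toContinuousLinearEquiv ∘ fderiv ℝ φ := rfl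

lemma contDiff_gradient (hφ : ContDiff ℝ 2 φ) : ContDiff ℝ 1 (∇ φ) :=
  (InnerProductSpace.toDual ℝ E).symm.toContinuousLinearEquiv.contDiff.comp
    (hφ.fderiv_right (by norm_num))

lemma inner_fderiv_gradient (φ : E → ℝ) (x v w : E) :
    ⟪fderiv ℝ (∇ φ) x v, w⟫ = fderiv ℝ (fderiv ℝ φ) x v w := by
  rw [gradient_eq_toDual_symm_comp_fderiv, ContinuousLinearEquiv.comp_fderiv]
  exact InnerProductSpace.toDual_symm_apply

lemma inner_gradient_sub_le (hφ : ConvexOn ℝ Set.univ φ) (hd : DifferentiableAt ℝ φ x) (y : E) :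
    ⟪∇ φ x, y - x⟫ ≤ φ y - φ x := by
  have line_convex : ConvexOn ℝ Set.univ (fun t : ℝ => φ (AffineMap.lineMap x y t)) :=
    hφ.comp_affineMap (AffineMap.lineMap x y : ℝ →ᵃ[ℝ] E)
  simpa [slope_def_field, inner_gradient_left] using line_convex.le_slope_of_hasDerivAt
    (Set.mem_univ 0) (Set.mem_univ 1) one_pos (hasDerivAt_comp_lineMap hd y)

lemma gradient_eq_iff_forall_inner_sub_le (hφ : ConvexOn ℝ Set.univ φ)
    (hd : DifferentiableAt ℝ φ x) :
    ∇ φ x = p ↔ ∀ y, ⟪p, y - x⟫ ≤ φ y - φ x := by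
  refine ⟨fun h y => h ▸ inner_gradient_sub_le hφ hd y, fun h => ?_⟩
  have isLocalMin : IsLocalMin (fun y => φ y - ⟪p, y⟫) x :=
    .of_forall fun y => by linarith [h y, inner_sub_right (𝕜 := ℝ) p y x]
  have fderiv_eq : fderiv ℝ φ x = InnerProductSpace.toDual ℝ E p :=
    sub_eq_zero.1 <| isLocalMin.hasFDerivAt_eq_zero <|
      hd.hasFDerivAt.sub (InnerProductSpace.toDual ℝ E p).hasFDerivAt
  rw [gradient, fderiv_eq, LinearIsometryEquiv.symm_apply_apply]

lemma convex_preimage_gradient_singleton (hφ : ConvexOn ℝ Set.univ φ) (hd : Differentiable ℝ φ)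
    (p : E) : Convex ℝ (∇ φ ⁻¹' {p}) := by
  have preimage_eq : ∇ φ ⁻¹' {p} =
      ⋂ y, {x ∈ Set.univ | (φ + fun x => -⟪p, x⟫) x ≤ φ y - ⟪p, y⟫} := by
    ext x
    simp only [Set.mem_preimage, Set.mem_singleton_iff,
      gradient_eq_iff_forall_inner_sub_le hφ (hd x), inner_sub_right, Set.mem_iInter,
      Set.mem_ofPred_eq, Set.mem_univ, true_and, Pi.add_apply]
    exact forall_congr' fun y => by constructor <;> intro h <;> linarith
  rw [preimage_eq]
  exact convex_iInter fun y =>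
    (hφ.add ((-innerSL ℝ p).toLinearMap.convexOn convex_univ)).convex_le _

lemma injective_gradient_of_injective_fderiv (hφ : ConvexOn ℝ Set.univ φ)
    (hd : Differentiable ℝ φ) (hd' : Differentiable ℝ (∇ φ))
    (hinj : ∀ x, Function.Injective (fderiv ℝ (∇ φ) x)) : Function.Injective (∇ φ) := by
  intro x y hxy
  have fiber_convex := convex_preimage_gradient_singleton hφ hd (∇ φ y)
  have line_const (t : ℝ) (ht : t ∈ Set.Icc 0 1) : ∇ φ (AffineMap.lineMap x y t) = ∇ φ y :=
    fiber_convex.lineMap_mem hxy rfl ht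
  have zero_mem : (0 : ℝ) ∈ Set.Icc (0 : ℝ) 1 := by simp
  have fderiv_eq_zero : fderiv ℝ (∇ φ) x (y - x) = 0 :=
    (uniqueDiffOn_Icc_zero_one 0 zero_mem).eq_deriv _
      (hasDerivAt_comp_lineMap (hd' x) y).hasDerivWithinAt <|
      (hasDerivWithinAt_const 0 _ (∇ φ y)).congr line_const (line_const 0 zero_mem)
  exact (sub_eq_zero.1 <| (map_eq_zero_iff _ (hinj x)).1 fderiv_eq_zero).symm

lemma monotone_inner_gradient_add_smul (hφ : ConvexOn ℝ Set.univ φ) (hd : Differentiable ℝ φ)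
    (x v : E) : Monotone fun t : ℝ => ⟪∇ φ (x + t • v), v⟫ := by
  intro s t hst
  rcases hst.eq_or_lt with rfl | hlt
  · rfl
  have le_at_s := inner_gradient_sub_le hφ (hd (x + s • v)) (x + t • v)
  have le_at_t := inner_gradient_sub_le hφ (hd (x + t • v)) (x + s • v)
  rw [add_sub_add_left_eq_sub, ← sub_smul, inner_smul_right] at le_at_s le_at_t
  refine le_of_mul_le_mul_left ?_ (sub_pos.2 hlt)
  linarith

lemma isPositive_fderiv_gradient (hφ : ConvexOn ℝ Set.univ φ) (hφ2 : ContDiff ℝ 2 φ) (x : E) :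
    (fderiv ℝ (∇ φ) x : E →ₗ[ℝ] E).IsPositive := by
  refine (LinearMap.isPositive_iff _).2 ⟨fun v w => ?_, fun v => ?_⟩
  · simp only [ContinuousLinearMap.coe_coe, real_inner_comm _ v, inner_fderiv_gradient]
    exact hφ2.contDiffAt.isSymmSndFDerivAt (by simp) v w
  · have hasDerivAt : HasDerivAt (fun t : ℝ => ⟪∇ φ (x + t • v), v⟫)
        ⟪fderiv ℝ (∇ φ) x v, v⟫ 0 := by
      simpa using (((contDiff_gradient hφ2).differentiable one_ne_zero
        x).hasFDerivAt.hasLineDerivAt v).inner ℝ (hasDerivAt_const 0 v)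
    exact hasDerivAt.deriv ▸
      (monotone_inner_gradient_add_smul hφ (hφ2.differentiable two_ne_zero) x v).deriv_nonneg

lemma exists_inner_sub_le (hφ : ConvexOn ℝ Set.univ φ) (hd : Differentiable ℝ φ)
    (hp : p ∈ Set.range (∇ φ)) : ∃ C, ∀ x, ⟪p, x⟫ - C ≤ φ x := by
  obtain ⟨y, rfl⟩ := hp
  refine ⟨⟪∇ φ y, y⟫ - φ y, fun x => ?_⟩
  linarith [inner_gradient_sub_le hφ (hd y) x, inner_sub_right (𝕜 := ℝ) (∇ φ y) x y]

lemma exists_mul_abs_inner_sub_le (hφ : ConvexOn ℝ Set.univ φ) (hd : Differentiable ℝ φ)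
    {ε : ℝ} (hε : 0 ≤ ε) {v : E} (hv : ε • v ∈ Set.range (∇ φ))
    (hv' : -(ε • v) ∈ Set.range (∇ φ)) : ∃ C, ∀ x, ε * |⟪v, x⟫| - C ≤ φ x := by
  obtain ⟨C₁, h₁⟩ := exists_inner_sub_le hφ hd hv
  obtain ⟨C₂, h₂⟩ := exists_inner_sub_le hφ hd hv'
  simp only [inner_neg_left, real_inner_smul_left] at h₁ h₂
  refine ⟨max C₁ C₂, fun x => ?_⟩
  rw [sub_le_iff_le_add, ← abs_of_nonneg hε, ← abs_mul, abs_le]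
  constructor <;> linarith [h₁ x, h₂ x, le_max_left C₁ C₂, le_max_right C₁ C₂]

end Gradient

section GradientGrowth

open scoped Gradient
open Topology

variable {E : Type*} [NormedAddCommGroup E] [InnerProductSpace ℝ E]

lemma norm_le_sum_abs_inner {ι : Type*} [Fintype ι] (b : OrthonormalBasis ι ℝ E) (x : E) :
    ‖x‖ ≤ ∑ i, |⟪b i, x⟫| :=
  calc ‖x‖ = ‖∑ i, ⟪b i, x⟫ • b i‖ := by rw [b.sum_repr']
    _ ≤ ∑ i, |⟪b i, x⟫| := (norm_sum_le _ _).trans_eq (by simp [norm_smul])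

variable [FiniteDimensional ℝ E] {φ : E → ℝ}

lemma hasLinearGrowth_of_range_gradient_mem_nhds (hφ : ConvexOn ℝ Set.univ φ)
    (hd : Differentiable ℝ φ) (h0 : Set.range (∇ φ) ∈ 𝓝 0) : HasLinearGrowth φ := by
  obtain ⟨ε, hε, hball⟩ := Metric.nhds_basis_closedBall.mem_iff.1 h0
  let b := stdOrthonormalBasis ℝ E
  let n := Module.finrank ℝ E
  have coordinate_bound (i) : ∃ C, ∀ x, ε * |⟪b i, x⟫| - C ≤ φ x :=
    exists_mul_abs_inner_sub_le hφ hd hε.le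
      (hball (by simp [norm_smul, abs_of_pos hε])) (hball (by simp [norm_smul, abs_of_pos hε]))
  choose C hC using coordinate_bound
  obtain ⟨C₀, hC₀⟩ := exists_inner_sub_le hφ hd (mem_of_mem_nhds h0)
  simp only [inner_zero_left, zero_sub] at hC₀
  refine ⟨ε / (n + 1), by positivity, (∑ i, C i + C₀) / (n + 1), fun x => ?_⟩
  have sum_bound : ε * ‖x‖ - ∑ i, C i ≤ n * φ x :=
    calc ε * ‖x‖ - ∑ i, C i ≤ ∑ i, (ε * |⟪b i, x⟫| - C i) := by
          rw [Finset.sum_sub_distrib, ← Finset.mul_sum]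
          gcongr
          exact norm_le_sum_abs_inner b x
      _ ≤ ∑ _i : Fin n, φ x := Finset.sum_le_sum fun i _ => hC i x
      _ = n * φ x := by simp
  rw [div_mul_eq_mul_div, ← sub_div, div_le_iff₀ (by positivity)]
  linarith [hC₀ x]

end GradientGrowth

section Legendre

open scoped Gradient

variable {E : Type*} [NormedAddCommGroup E] [InnerProductSpace ℝ E]

/-- The value at the slope `∇ φ x` of the Legendre transform `p ↦ sup_y (⟪p, y⟫ - φ y)` of a
convex function `φ`, where the supremum is attained at `y = x`. -/
noncomputable def legendreAtGradient [CompleteSpace E] (φ : E → ℝ) (x : E) : ℝ :=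
  ⟪∇ φ x, x⟫ - φ x

variable [FiniteDimensional ℝ E] {φ : E → ℝ}

lemma divergence_exp_neg_smul {Y : E → E} {x : E} (hφ : DifferentiableAt ℝ φ x)
    (hY : DifferentiableAt ℝ Y x) :
    divergence (fun x => Real.exp (-φ x) • Y x) x =
      Real.exp (-φ x) * (divergence Y x - ⟪∇ φ x, Y x⟫) := by
  rw [divergence_smul hφ.fun_neg.exp hY, fderiv_exp hφ.fun_neg, fderiv_fun_neg, inner_gradient_left]
  simp
  ring

lemma divergence_neg_id (x : E) : divergence (fun x : E => -x) x = -Module.finrank ℝ E := by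
  simpa [divergence] using divergence_sub_id (differentiableAt_const (0 : E) (x := x))

variable [MeasurableSpace E] [BorelSpace E] {μ : Measure E} [μ.IsAddHaarMeasure]

lemma integrable_exp_neg_mul_legendreAtGradient (hφ : ContDiff ℝ 1 φ)
    (hconv : ConvexOn ℝ Set.univ φ) (hgrowth : HasLinearGrowth φ) :
    Integrable (fun x => Real.exp (-φ x) * legendreAtGradient φ x) μ := by
  let n : ℝ := Module.finrank ℝ E
  let Y : E → E := fun x => Real.exp (-φ x) • -x
  have hd : Differentiable ℝ φ := hφ.differentiable one_ne_zero
  have exp_integrable := hgrowth.integrable_exp_neg hφ.continuous (μ := μ)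
  have exp_mul_integrable := hgrowth.integrable_exp_neg_mul_self hφ.continuous (μ := μ)
  have divergence_eq (x) : divergence Y x = Real.exp (-φ x) * (⟪∇ φ x, x⟫ - n) := by
    simp only [Y]
    rw [divergence_exp_neg_smul (hd x) differentiableAt_fun_id.fun_neg, divergence_neg_id,
      inner_neg_right]
    ring
  have divergence_integrable : Integrable (divergence Y) μ := by
    refine integrable_divergence_of_le (f := fun x => Real.exp (-φ x) * φ x
      - (φ 0 + n) * Real.exp (-φ x)) (hφ.neg.exp.smul contDiff_neg) ?_ ?_ ?_ fun x => ?_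
    · simpa only [Y, smul_neg] using (hgrowth.integrable_exp_neg_smul_id hφ.continuous).fun_neg
    · fun_prop
    · exact exp_mul_integrable.sub (exp_integrable.const_mul _)
    · have := inner_gradient_sub_le hconv (hd x) 0
      rw [zero_sub, inner_neg_right] at this
      rw [divergence_eq, mul_comm (φ 0 + n), ← mul_sub]
      exact mul_le_mul_of_nonneg_left (by linarith) (Real.exp_pos _).le
  refine ((divergence_integrable.add (exp_integrable.const_mul n)).sub exp_mul_integrable).congr
    (.of_forall fun x => ?_)
  simp only [Pi.add_apply, Pi.sub_apply, divergence_eq, legendreAtGradient]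
  ring

end Legendre

section InverseFunction


lemma contDiffAt_invFun {E F : Type*} [NormedAddCommGroup E] [NormedSpace ℝ E] [CompleteSpace E]
    [NormedAddCommGroup F] [NormedSpace ℝ F] {f : E → F} {f' : E ≃L[ℝ] F} {x : E}
    {n : WithTop ℕ∞} (hn : n ≠ 0) (hf : ContDiffAt ℝ n f x) (hf' : HasFDerivAt f (f' : E →L[ℝ] F) x)
    (hinj : Function.Injective f) : ContDiffAt ℝ n (Function.invFun f) (f x) :=
  (hf.to_localInverse hf' hn).congr_of_eventuallyEq <|
    (hf.hasStrictFDerivAt' hf' hn).localInverse_unique <| .of_forall <|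
      Function.leftInverse_invFun hinj

end InverseFunction

section HessianDeterminant

open scoped Gradient

lemma hessDet_eq_det_fderiv_gradient {n : ℕ} (φ : EuclideanSpace ℝ (Fin n) → ℝ)
    (x : EuclideanSpace ℝ (Fin n)) : hessDet φ x = (fderiv ℝ (∇ φ) x).det := by
  let b := (EuclideanSpace.basisFun (Fin n) ℝ).toBasis
  rw [ContinuousLinearMap.det, ← LinearMap.det_toMatrix b, ← Matrix.det_transpose, hessDet]
  congr 1
  ext i j
  simp [b, LinearMap.toMatrix_apply, iteratedFDeriv_two_apply, ← inner_fderiv_gradient,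
    EuclideanSpace.inner_single_right]

end HessianDeterminant

section ConvexSolution

open scoped Gradient

variable {E : Type*} [NormedAddCommGroup E] [InnerProductSpace ℝ E] [FiniteDimensional ℝ E]

/-- A `C²` convex solution of the Monge–Ampère equation `g(∇φ) det D²φ = e^{-φ}`, where the Hessian
is encoded as the derivative of the gradient map. -/
structure IsConvexSolution (g φ : E → ℝ) : Prop where
  contDiff : ContDiff ℝ 2 φ
  convexOn : ConvexOn ℝ Set.univ φ
  equation (x : E) : g (∇ φ x) * (fderiv ℝ (∇ φ) x).det = Real.exp (-φ x)

namespace IsConvexSolution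

lemma of_hessDet {n : ℕ} {g φ : EuclideanSpace ℝ (Fin n) → ℝ} (hφ : ContDiff ℝ 2 φ)
    (hconv : ConvexOn ℝ Set.univ φ) (hMA : ∀ x, g (∇ φ x) * hessDet φ x = Real.exp (-φ x)) :
    IsConvexSolution g φ :=
  ⟨hφ, hconv, fun x => hessDet_eq_det_fderiv_gradient φ x ▸ hMA x⟩

variable {g φ : E → ℝ} (h : IsConvexSolution g φ)
include h

lemma contDiff_one : ContDiff ℝ 1 φ := h.contDiff.of_le one_le_two

lemma differentiable : Differentiable ℝ φ := h.contDiff.differentiable two_ne_zero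

lemma continuous : Continuous φ := h.contDiff.continuous

lemma differentiable_gradient : Differentiable ℝ (∇ φ) :=
  (contDiff_gradient h.contDiff).differentiable one_ne_zero

lemma det_hessian_ne_zero (x : E) : (fderiv ℝ (∇ φ) x).det ≠ 0 :=
  right_ne_zero_of_mul <| h.equation x ▸ (Real.exp_pos _).ne'

lemma exists_equiv_hasStrictFDerivAt_gradient (x : E) :
    ∃ H : E ≃L[ℝ] E, HasStrictFDerivAt (∇ φ) (H : E →L[ℝ] E) x :=
  ⟨(fderiv ℝ (∇ φ) x).toContinuousLinearEquivOfDetNeZero (h.det_hessian_ne_zero x),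
    (contDiff_gradient h.contDiff).contDiffAt.hasStrictFDerivAt one_ne_zero⟩

lemma injective_gradient : Function.Injective (∇ φ) :=
  injective_gradient_of_injective_fderiv h.convexOn h.differentiable h.differentiable_gradient
    fun x => by
      obtain ⟨H, hH⟩ := h.exists_equiv_hasStrictFDerivAt_gradient x
      exact hH.hasFDerivAt.fderiv ▸ H.injective

lemma isOpenMap_gradient : IsOpenMap (∇ φ) := by
  choose H hH using h.exists_equiv_hasStrictFDerivAt_gradient
  exact isOpenMap_of_hasStrictFDerivAt_equiv hH

lemma hasLinearGrowth (h0 : 0 ∈ Set.range (∇ φ)) : HasLinearGrowth φ :=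
  hasLinearGrowth_of_range_gradient_mem_nhds h.convexOn h.differentiable
    (h.isOpenMap_gradient.isOpen_range.mem_nhds h0)

lemma integrable_exp_neg_mul_legendreAtGradient [MeasurableSpace E] [BorelSpace E]
    {μ : Measure E} [μ.IsAddHaarMeasure] (h0 : 0 ∈ Set.range (∇ φ)) :
    Integrable (fun x => Real.exp (-φ x) * legendreAtGradient φ x) μ :=
  _root_.integrable_exp_neg_mul_legendreAtGradient h.contDiff_one h.convexOn (h.hasLinearGrowth h0)

lemma continuous_legendreAtGradient : Continuous (legendreAtGradient φ) :=
  ((contDiff_gradient h.contDiff).continuous.inner continuous_id).sub h.continuous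

end IsConvexSolution

end ConvexSolution

section Transport

open scoped Gradient

variable {E : Type*} [NormedAddCommGroup E] [InnerProductSpace ℝ E] [FiniteDimensional ℝ E]

/-- The map `(∇ φ₁)⁻¹ ∘ ∇ φ₀`; it carries the measure `e^{-φ₀} dx` to `e^{-φ₁} dx` when `φ₀` and
`φ₁` solve the same equation. The inverse is `Function.invFun`, so the map is meaningful when `∇ φ₁`
is injective and its range contains that of `∇ φ₀`. -/
noncomputable def gradientTransport (φ₀ φ₁ : E → ℝ) (x : E) : E :=
  Function.invFun (∇ φ₁) (∇ φ₀ x)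

variable {g φ₀ φ₁ : E → ℝ}

lemma gradient_gradientTransport (hrange : Set.range (∇ φ₀) = Set.range (∇ φ₁)) (x : E) :
    ∇ φ₁ (gradientTransport φ₀ φ₁ x) = ∇ φ₀ x :=
  Function.invFun_eq (hrange ▸ Set.mem_range_self x : ∇ φ₀ x ∈ Set.range (∇ φ₁))

namespace IsConvexSolution

lemma leftInverse_gradientTransport (h₀ : IsConvexSolution g φ₀)
    (hrange : Set.range (∇ φ₀) = Set.range (∇ φ₁)) :
    Function.LeftInverse (gradientTransport φ₁ φ₀) (gradientTransport φ₀ φ₁) := fun x =>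
  h₀.injective_gradient <| by
    rw [gradient_gradientTransport hrange.symm, gradient_gradientTransport hrange]

variable (h₀ : IsConvexSolution g φ₀) (h₁ : IsConvexSolution g φ₁)
  (hrange : Set.range (∇ φ₀) = Set.range (∇ φ₁))
include h₀ h₁ hrange

lemma bijective_gradientTransport : Function.Bijective (gradientTransport φ₀ φ₁) :=
  ⟨(h₀.leftInverse_gradientTransport hrange).injective,
    (h₁.leftInverse_gradientTransport hrange.symm).surjective⟩

lemma contDiff_gradientTransport : ContDiff ℝ 1 (gradientTransport φ₀ φ₁) := by
  refine contDiff_iff_contDiffAt.2 fun x => ?_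
  obtain ⟨H, hH⟩ := h₁.exists_equiv_hasStrictFDerivAt_gradient (gradientTransport φ₀ φ₁ x)
  have invFun_contDiffAt := contDiffAt_invFun one_ne_zero (contDiff_gradient h₁.contDiff).contDiffAt
    hH.hasFDerivAt h₁.injective_gradient
  rw [gradient_gradientTransport hrange] at invFun_contDiffAt
  exact invFun_contDiffAt.comp x (contDiff_gradient h₀.contDiff).contDiffAt

lemma differentiable_gradientTransport : Differentiable ℝ (gradientTransport φ₀ φ₁) :=
  (h₀.contDiff_gradientTransport h₁ hrange).differentiable one_ne_zero

lemma hessian_comp_fderiv_gradientTransport (x : E) :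
    fderiv ℝ (∇ φ₁) (gradientTransport φ₀ φ₁ x) ∘L fderiv ℝ (gradientTransport φ₀ φ₁) x =
      fderiv ℝ (∇ φ₀) x := by
  rw [← fderiv_comp x (h₁.differentiable_gradient _)
    (h₀.differentiable_gradientTransport h₁ hrange x)]
  exact congrArg (fderiv ℝ · x) (funext (gradient_gradientTransport hrange))

lemma exp_neg_mul_det_fderiv_gradientTransport (x : E) :
    Real.exp (-φ₁ (gradientTransport φ₀ φ₁ x)) * (fderiv ℝ (gradientTransport φ₀ φ₁) x).det =
      Real.exp (-φ₀ x) := by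
  rw [← h₁.equation, ← h₀.equation, gradient_gradientTransport hrange, mul_assoc,
    ← h₀.hessian_comp_fderiv_gradientTransport h₁ hrange]
  exact congrArg _ (LinearMap.det_comp _ _).symm

lemma det_fderiv_gradientTransport_pos (x : E) :
    0 < (fderiv ℝ (gradientTransport φ₀ φ₁) x).det :=
  pos_of_mul_pos_right (h₀.exp_neg_mul_det_fderiv_gradientTransport h₁ hrange x ▸ Real.exp_pos _)
    (Real.exp_pos _).le

lemma log_det_fderiv_gradientTransport (x : E) :
    Real.log (fderiv ℝ (gradientTransport φ₀ φ₁) x).det =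
      φ₁ (gradientTransport φ₀ φ₁ x) - φ₀ x := by
  have log_equation :=
    congrArg Real.log (h₀.exp_neg_mul_det_fderiv_gradientTransport h₁ hrange x)
  rw [Real.log_mul (Real.exp_pos _).ne' (h₀.det_fderiv_gradientTransport_pos h₁ hrange x).ne',
    Real.log_exp, Real.log_exp] at log_equation
  linarith

end IsConvexSolution

end Transport

section Uniqueness

open scoped Gradient

variable {E : Type*} [NormedAddCommGroup E] [InnerProductSpace ℝ E] [FiniteDimensional ℝ E]
  {g φ₀ φ₁ : E → ℝ}

/-- The defect in the inequality `log det DT ≤ tr DT - n` for the derivative of the transport map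
`T` from `φ₀` to `φ₁`, weighted by `e^{-φ₀}`, with `log det DT` replaced by its value
`φ₁ ∘ T - φ₀` given by the equation. -/
noncomputable def transportDefect (φ₀ φ₁ : E → ℝ) (x : E) : ℝ :=
  Real.exp (-φ₀ x) * (divergence (gradientTransport φ₀ φ₁) x - Module.finrank ℝ E -
    (φ₁ (gradientTransport φ₀ φ₁ x) - φ₀ x))

namespace IsConvexSolution

variable (h₀ : IsConvexSolution g φ₀) (h₁ : IsConvexSolution g φ₁)
  (hrange : Set.range (∇ φ₀) = Set.range (∇ φ₁))
include h₀ h₁ hrange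

lemma continuous_transportDefect : Continuous (transportDefect φ₀ φ₁) := by
  have transport_contDiff := h₀.contDiff_gradientTransport h₁ hrange
  exact h₀.continuous.neg.rexp.mul (((continuous_divergence transport_contDiff).sub
    continuous_const).sub ((h₁.continuous.comp transport_contDiff.continuous).sub h₀.continuous))

lemma isPositive_hessian_comp_fderiv_gradientTransport (x : E) :
    ((fderiv ℝ (∇ φ₁) (gradientTransport φ₀ φ₁ x) : E →ₗ[ℝ] E) ∘ₗ
      (fderiv ℝ (gradientTransport φ₀ φ₁) x : E →ₗ[ℝ] E)).IsPositive := by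
  rw [← ContinuousLinearMap.toLinearMap_comp, h₀.hessian_comp_fderiv_gradientTransport h₁ hrange]
  exact isPositive_fderiv_gradient h₀.convexOn h₀.contDiff x

lemma det_hessian_comp_fderiv_gradientTransport_ne_zero (x : E) :
    LinearMap.det ((fderiv ℝ (∇ φ₁) (gradientTransport φ₀ φ₁ x) : E →ₗ[ℝ] E) ∘ₗ
      (fderiv ℝ (gradientTransport φ₀ φ₁) x : E →ₗ[ℝ] E)) ≠ 0 := by
  rw [← ContinuousLinearMap.toLinearMap_comp, h₀.hessian_comp_fderiv_gradientTransport h₁ hrange]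
  exact h₀.det_hessian_ne_zero x

lemma transportDefect_nonneg (x : E) : 0 ≤ transportDefect φ₀ φ₁ x := by
  rw [transportDefect, ← h₀.log_det_fderiv_gradientTransport h₁ hrange]
  exact mul_nonneg (Real.exp_pos _).le <| sub_nonneg.2 <| log_det_le_trace_sub_finrank
    (isPositive_fderiv_gradient h₁.convexOn h₁.contDiff _)
    (h₀.isPositive_hessian_comp_fderiv_gradientTransport h₁ hrange x)
    (h₀.det_hessian_comp_fderiv_gradientTransport_ne_zero h₁ hrange x)

lemma fderiv_gradientTransport_eq_id {x : E} (hx : transportDefect φ₀ φ₁ x = 0) :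
    fderiv ℝ (gradientTransport φ₀ φ₁) x = ContinuousLinearMap.id ℝ E := by
  rw [transportDefect, ← h₀.log_det_fderiv_gradientTransport h₁ hrange, mul_eq_zero,
    or_iff_right (Real.exp_pos _).ne', sub_eq_zero] at hx
  exact ContinuousLinearMap.coe_injective <| eq_id_of_log_det_eq_trace_sub_finrank
    (isPositive_fderiv_gradient h₁.convexOn h₁.contDiff _)
    (h₀.isPositive_hessian_comp_fderiv_gradientTransport h₁ hrange x)
    (h₀.det_hessian_comp_fderiv_gradientTransport_ne_zero h₁ hrange x) hx.symm

lemma contDiff_exp_neg_smul_gradientTransport_sub_id :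
    ContDiff ℝ 1 fun x => Real.exp (-φ₀ x) • (gradientTransport φ₀ φ₁ x - x) :=
  h₀.contDiff_one.neg.exp.smul ((h₀.contDiff_gradientTransport h₁ hrange).sub contDiff_id)

lemma divergence_exp_neg_smul_gradientTransport_sub_id (x : E) :
    divergence (fun x => Real.exp (-φ₀ x) • (gradientTransport φ₀ φ₁ x - x)) x =
      transportDefect φ₀ φ₁ x + (Real.exp (-φ₀ x) * legendreAtGradient φ₀ x -
        Real.exp (-φ₀ x) * legendreAtGradient φ₁ (gradientTransport φ₀ φ₁ x)) := by
  have transport_differentiable := h₀.differentiable_gradientTransport h₁ hrange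
  rw [divergence_exp_neg_smul (h₀.differentiable x) ((transport_differentiable x).fun_sub
      differentiableAt_fun_id), divergence_sub_id (transport_differentiable x), inner_sub_right,
    transportDefect, legendreAtGradient, legendreAtGradient, gradient_gradientTransport hrange]
  ring

variable {F : Type*} [NormedAddCommGroup F] [NormedSpace ℝ F]

lemma abs_det_smul_exp_neg_smul_gradientTransport (f : E → F) (x : E) :
    |(fderiv ℝ (gradientTransport φ₀ φ₁) x).det| •
        Real.exp (-φ₁ (gradientTransport φ₀ φ₁ x)) • f (gradientTransport φ₀ φ₁ x) =
      Real.exp (-φ₀ x) • f (gradientTransport φ₀ φ₁ x) := by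
  rw [abs_of_pos (h₀.det_fderiv_gradientTransport_pos h₁ hrange x), smul_smul, mul_comm,
    h₀.exp_neg_mul_det_fderiv_gradientTransport h₁ hrange]

section Integration

variable [MeasurableSpace E] [BorelSpace E] {μ : Measure E} [μ.IsAddHaarMeasure]

lemma integrable_exp_neg_smul_comp_gradientTransport_iff {f : E → F} :
    Integrable (fun x => Real.exp (-φ₀ x) • f (gradientTransport φ₀ φ₁ x)) μ ↔
      Integrable (fun y => Real.exp (-φ₁ y) • f y) μ := by
  have transport_bijective := h₀.bijective_gradientTransport h₁ hrange
  have change_of_variables := integrableOn_image_iff_integrableOn_abs_det_fderiv_smul μ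
    MeasurableSet.univ (fun x _ => (h₀.differentiable_gradientTransport h₁ hrange
      x).hasFDerivAt.hasFDerivWithinAt) transport_bijective.injective.injOn
    (fun y => Real.exp (-φ₁ y) • f y)
  simpa only [Set.image_univ, transport_bijective.surjective.range_eq, integrableOn_univ,
    h₀.abs_det_smul_exp_neg_smul_gradientTransport h₁ hrange] using change_of_variables.symm

lemma integral_exp_neg_smul_comp_gradientTransport (f : E → F) :
    ∫ x, Real.exp (-φ₀ x) • f (gradientTransport φ₀ φ₁ x) ∂μ =
      ∫ y, Real.exp (-φ₁ y) • f y ∂μ := by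
  have transport_bijective := h₀.bijective_gradientTransport h₁ hrange
  have change_of_variables := integral_image_eq_integral_abs_det_fderiv_smul μ
    MeasurableSet.univ (fun x _ => (h₀.differentiable_gradientTransport h₁ hrange
      x).hasFDerivAt.hasFDerivWithinAt) transport_bijective.injective.injOn
    (fun y => Real.exp (-φ₁ y) • f y)
  simpa only [Set.image_univ, transport_bijective.surjective.range_eq, setIntegral_univ,
    h₀.abs_det_smul_exp_neg_smul_gradientTransport h₁ hrange] using change_of_variables.symm

variable (h0 : 0 ∈ Set.range (∇ φ₀))
include h0

lemma integrable_exp_neg_smul_gradientTransport_sub_id :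
    Integrable (fun x => Real.exp (-φ₀ x) • (gradientTransport φ₀ φ₁ x - x)) μ := by
  simp only [smul_sub]
  exact ((h₀.integrable_exp_neg_smul_comp_gradientTransport_iff h₁ hrange (f := fun y => y)).2
    ((h₁.hasLinearGrowth (hrange ▸ h0)).integrable_exp_neg_smul_id h₁.continuous)).sub
    ((h₀.hasLinearGrowth h0).integrable_exp_neg_smul_id h₀.continuous)

lemma integrable_exp_neg_mul_legendreAtGradient_gradientTransport :
    Integrable (fun x => Real.exp (-φ₀ x) * legendreAtGradient φ₁ (gradientTransport φ₀ φ₁ x)) μ :=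
  (h₀.integrable_exp_neg_smul_comp_gradientTransport_iff h₁ hrange).2
    (h₁.integrable_exp_neg_mul_legendreAtGradient (hrange ▸ h0))

lemma integrable_legendreAtGradient_sub_gradientTransport :
    Integrable (fun x => Real.exp (-φ₀ x) * legendreAtGradient φ₀ x -
      Real.exp (-φ₀ x) * legendreAtGradient φ₁ (gradientTransport φ₀ φ₁ x)) μ :=
  (h₀.integrable_exp_neg_mul_legendreAtGradient h0).sub
    (h₀.integrable_exp_neg_mul_legendreAtGradient_gradientTransport h₁ hrange h0)

lemma integrable_divergence_exp_neg_smul_gradientTransport_sub_id :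
    Integrable (divergence fun x => Real.exp (-φ₀ x) • (gradientTransport φ₀ φ₁ x - x)) μ :=
  integrable_divergence_of_le (h₀.contDiff_exp_neg_smul_gradientTransport_sub_id h₁ hrange)
    (h₀.integrable_exp_neg_smul_gradientTransport_sub_id h₁ hrange h0)
    ((h₀.continuous.neg.rexp.mul h₀.continuous_legendreAtGradient).sub
      (h₀.continuous.neg.rexp.mul (h₁.continuous_legendreAtGradient.comp
        (h₀.contDiff_gradientTransport h₁ hrange).continuous)))
    (h₀.integrable_legendreAtGradient_sub_gradientTransport h₁ hrange h0) fun x => by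
      rw [h₀.divergence_exp_neg_smul_gradientTransport_sub_id h₁ hrange]
      exact le_add_of_nonneg_left (h₀.transportDefect_nonneg h₁ hrange x)

lemma integrable_transportDefect : Integrable (transportDefect φ₀ φ₁) μ :=
  ((h₀.integrable_divergence_exp_neg_smul_gradientTransport_sub_id h₁ hrange h0).sub
    (h₀.integrable_legendreAtGradient_sub_gradientTransport h₁ hrange h0)).congr <|
      .of_forall fun x =>
        sub_eq_of_eq_add (h₀.divergence_exp_neg_smul_gradientTransport_sub_id h₁ hrange x)

lemma integral_transportDefect :
    ∫ x, transportDefect φ₀ φ₁ x ∂μ =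
      ∫ x, Real.exp (-φ₁ x) * legendreAtGradient φ₁ x ∂μ -
        ∫ x, Real.exp (-φ₀ x) * legendreAtGradient φ₀ x ∂μ := by
  have divergence_integral := integral_divergence_eq_zero
    (h₀.contDiff_exp_neg_smul_gradientTransport_sub_id h₁ hrange)
    (h₀.integrable_exp_neg_smul_gradientTransport_sub_id h₁ hrange h0 (μ := μ))
    (h₀.integrable_divergence_exp_neg_smul_gradientTransport_sub_id h₁ hrange h0)
  have change_of_variables := h₀.integral_exp_neg_smul_comp_gradientTransport h₁ hrange
    (legendreAtGradient φ₁) (μ := μ)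
  simp only [smul_eq_mul] at change_of_variables
  simp only [h₀.divergence_exp_neg_smul_gradientTransport_sub_id h₁ hrange] at divergence_integral
  rw [integral_add (h₀.integrable_transportDefect h₁ hrange h0)
      (h₀.integrable_legendreAtGradient_sub_gradientTransport h₁ hrange h0),
    integral_sub (h₀.integrable_exp_neg_mul_legendreAtGradient h0)
      (h₀.integrable_exp_neg_mul_legendreAtGradient_gradientTransport h₁ hrange h0),
    change_of_variables] at divergence_integral
  linarith

end Integration

variable (h0 : 0 ∈ Set.range (∇ φ₀))
include h0

lemma transportDefect_eq_zero : transportDefect φ₀ φ₁ = 0 := by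
  borelize E
  have integral_eq := h₀.integral_transportDefect h₁ hrange h0 (μ := volume)
  have integral_eq_swap :=
    h₁.integral_transportDefect h₀ hrange.symm (hrange ▸ h0) (μ := volume)
  have integral_nonneg_swap : 0 ≤ ∫ x, transportDefect φ₁ φ₀ x :=
    integral_nonneg (h₁.transportDefect_nonneg h₀ hrange.symm)
  have defect_nonneg := h₀.transportDefect_nonneg h₁ hrange
  have integral_eq_zero : ∫ x, transportDefect φ₀ φ₁ x = 0 :=
    le_antisymm (by linarith) (integral_nonneg defect_nonneg)
  exact (h₀.continuous_transportDefect h₁ hrange).ae_eq_iff_eq volume continuous_zero |>.1 <|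
    (integral_eq_zero_iff_of_nonneg defect_nonneg
      (h₀.integrable_transportDefect h₁ hrange h0)).1 integral_eq_zero

lemma gradientTransport_eq_add (x : E) :
    gradientTransport φ₀ φ₁ x = x + gradientTransport φ₀ φ₁ 0 := by
  have fderiv_eq := fun x => h₀.fderiv_gradientTransport_eq_id h₁ hrange
    (congrFun (h₀.transportDefect_eq_zero h₁ hrange h0) x)
  have transport_differentiable := h₀.differentiable_gradientTransport h₁ hrange
  have displacement_const := is_const_of_fderiv_eq_zero (𝕜 := ℝ)
    (transport_differentiable.sub differentiable_id) (fun x => by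
      rw [fderiv_sub (transport_differentiable x) differentiableAt_id, fderiv_eq, fderiv_id,
        sub_self]) x 0
  simpa [sub_eq_iff_eq_add'] using displacement_const

lemma apply_gradientTransport (x : E) : φ₁ (gradientTransport φ₀ φ₁ x) = φ₀ x := by
  have log_det := h₀.log_det_fderiv_gradientTransport h₁ hrange x
  rw [h₀.fderiv_gradientTransport_eq_id h₁ hrange
    (congrFun (h₀.transportDefect_eq_zero h₁ hrange h0) x)] at log_det
  simpa [ContinuousLinearMap.det, sub_eq_zero, eq_comm] using log_det

end IsConvexSolution

theorem statement2_general (h₀ : IsConvexSolution g φ₀) (h₁ : IsConvexSolution g φ₁)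
    (hrange : Set.range (∇ φ₀) = Set.range (∇ φ₁)) (h0 : 0 ∈ Set.range (∇ φ₀)) :
    ∃ a, ∀ x, φ₁ x = φ₀ (x + a) := by
  refine ⟨-gradientTransport φ₀ φ₁ 0, fun x => ?_⟩
  rw [← h₀.apply_gradientTransport h₁ hrange h0, h₀.gradientTransport_eq_add h₁ hrange h0,
    neg_add_cancel_right]

end Uniqueness

/-- Two smooth convex solutions of `g(∇φ) det D²φ = e^{-φ}`
whose gradients are diffeomorphisms onto the interior of the convex body `P`
differ by a translation: `φ₁(x) = φ₀(x + a)` for some vector `a`. -/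
theorem statement2 {n : ℕ} (P : Set (EuclideanSpace ℝ (Fin n)))
    (hPcomp : IsCompact P) (hPconv : Convex ℝ P)
    (h0 : (0 : EuclideanSpace ℝ (Fin n)) ∈ interior P)
    (g : EuclideanSpace ℝ (Fin n) → ℝ)
    (hg : ContDiff ℝ (⊤ : ℕ∞) g) (hgpos : ∀ p, 0 < g p)
    (φ₀ φ₁ : EuclideanSpace ℝ (Fin n) → ℝ)
    (hφ₀sm : ContDiff ℝ (⊤ : ℕ∞) φ₀) (hφ₀conv : ConvexOn ℝ Set.univ φ₀)
    (hMA₀ : ∀ x, g (gradient φ₀ x) * hessDet φ₀ x = Real.exp (-φ₀ x))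
    (hdiffeo₀ : IsGradDiffeoOnto φ₀ (interior P))
    (hφ₁sm : ContDiff ℝ (⊤ : ℕ∞) φ₁) (hφ₁conv : ConvexOn ℝ Set.univ φ₁)
    (hMA₁ : ∀ x, g (gradient φ₁ x) * hessDet φ₁ x = Real.exp (-φ₁ x))
    (hdiffeo₁ : IsGradDiffeoOnto φ₁ (interior P)) :
    ∃ a : EuclideanSpace ℝ (Fin n), ∀ x, φ₁ x = φ₀ (x + a) := by
  have two_le : (2 : WithTop ℕ∞) ≤ (⊤ : ℕ∞) := WithTop.coe_le_coe.2 le_top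
  exact statement2_general (.of_hessDet (hφ₀sm.of_le two_le) hφ₀conv hMA₀)
    (.of_hessDet (hφ₁sm.of_le two_le) hφ₁conv hMA₁)
    (hdiffeo₀.2.2.1.trans hdiffeo₁.2.2.1.symm) (hdiffeo₀.2.2.1 ▸ h0)
end

section
/- Let P ⊆ ℝⁿ be a convex body and let φ : ℝⁿ → ℝ be a convex function such that φ − φ_P is bounded on ℝⁿ. Then: (i) φ*(p) = +∞ for every p ∉ P; (ii) φ* is finite (real-valued) and bounded on P; (iii) sup_{x ∈ ℝⁿ} (φ(x) − φ_P(x)) = − inf_{p ∈ P} φ*(p); (iv) inf_{x ∈ ℝⁿ} (φ(x) − φ_P(x)) = − sup_{p ∈ P} φ*(p); and consequently (v) sup_{x ∈ ℝⁿ} |φ(x) − φ_P(x)| = sup_{p ∈ P} |φ*(p)|. -/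
open scoped InnerProductSpace
open MeasureTheory

/-- The support function `φ_P(x) = sup_{p ∈ P} ⟨x, p⟫` of a set `P`. -/
noncomputable def suppFn {n : ℕ} (P : Set (EuclideanSpace ℝ (Fin n)))
    (x : EuclideanSpace ℝ (Fin n)) : ℝ :=
  ⨆ p : P, ⟪x, (p : EuclideanSpace ℝ (Fin n))⟫_ℝ

/-- The (real-valued) Legendre transform `φ*(p) = sup_x (⟨p, x⟩ - φ(x))`. -/
noncomputable def legendre {n : ℕ} (φ : EuclideanSpace ℝ (Fin n) → ℝ)
    (p : EuclideanSpace ℝ (Fin n)) : ℝ :=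
  ⨆ x, (⟪p, x⟫_ℝ - φ x)

/-- The Legendre transform with values in `ℝ ∪ {+∞}` (as a sup of real numbers
over a nonempty index it never takes the value `-∞`). -/
noncomputable def legendreE {n : ℕ} (φ : EuclideanSpace ℝ (Fin n) → ℝ)
    (p : EuclideanSpace ℝ (Fin n)) : EReal :=
  ⨆ x, ((⟪p, x⟫_ℝ - φ x : ℝ) : EReal)

/-!
An affine function with slope `p` lies below `φ` exactly when its constant term is at most `-φ*(p)`.
Since `φ ≤ φ_P + C` and `φ_P` is positively homogeneous, no such affine function exists for
`p ∉ P`: on a ray along which `p` is strictly separated from `P` it would overtake `φ_P + C`.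
So a convex `φ`, which is continuous because it is locally bounded above, is the supremum of the
functions `⟪p, ·⟫ - φ*(p)` with `p ∈ P`. Comparing this with `φ_P(x) = sup_{p ∈ P} ⟪x, p⟫` shows,
for every real `c`, that `c ≤ φ*` on `P` iff `φ - φ_P ≤ -c`, and that `φ* ≤ c` on `P` iff
`-c ≤ φ - φ_P`. The formulas for the suprema and infima follow from these two equivalences.
-/

open Set Bornology

section OrderLemmas

variable {ι : Type*}

theorem iSup_ereal_coe_eq_top {f : ι → ℝ} (hf : ¬BddAbove (range f)) :
    ⨆ i, (f i : EReal) = ⊤ := by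
  refine (EReal.eq_top_iff_forall_lt _).2 fun M => ?_
  obtain ⟨_, ⟨i, rfl⟩, hi⟩ := not_bddAbove_iff.1 hf M
  exact (EReal.coe_lt_coe hi).trans_le (le_iSup (fun i => (f i : EReal)) i)

variable [Nonempty ι]

theorem ciSup_abs_eq_max {α : Type*} [AddCommGroup α] [ConditionallyCompleteLinearOrder α]
    [IsOrderedAddMonoid α] {f : ι → α} (ha : BddAbove (range f)) (hb : BddBelow (range f)) :
    ⨆ i, |f i| = max (⨆ i, f i) (-⨅ i, f i) := by
  obtain ⟨M, hM⟩ := ha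
  obtain ⟨m, hm⟩ := hb
  have habs : BddAbove (range fun i => |f i|) := by
    refine ⟨max M (-m), forall_mem_range.2 fun i => ?_⟩
    exact max_le_max (hM (mem_range_self i)) (neg_le_neg (hm (mem_range_self i)))
  refine eq_of_forall_ge_iff fun c => ?_
  rw [ciSup_le_iff habs, max_le_iff, ciSup_le_iff ⟨M, hM⟩, neg_le, le_ciInf_iff ⟨m, hm⟩]
  simp only [abs_le', neg_le, forall_and]

theorem ereal_coe_ciSup {f : ι → ℝ} (hf : BddAbove (range f)) :
    ((⨆ i, f i : ℝ) : EReal) = ⨆ i, (f i : EReal) :=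
  EReal.coe_strictMono.monotone.map_ciSup_of_continuousAt
    continuous_coe_real_ereal.continuousAt hf

end OrderLemmas

section SupportFunction

variable {E : Type*} [NormedAddCommGroup E] [InnerProductSpace ℝ E] {P : Set E}

/-- The support function `x ↦ sup_{p ∈ P} ⟪x, p⟫` of a subset of a real inner product space, of
which `suppFn` is the case of `ℝⁿ`. It is real-valued, with junk value `0` at points where the
supremum is infinite or `P` is empty. -/
noncomputable def supportFunction (P : Set E) (x : E) : ℝ :=
  ⨆ p : P, ⟪x, (p : E)⟫_ℝ

theorem supportFunction_zero (P : Set E) : supportFunction P 0 = 0 := by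
  simp only [supportFunction, inner_zero_left, Real.iSup_const_zero]

theorem supportFunction_smul (P : Set E) {t : ℝ} (ht : 0 ≤ t) (x : E) :
    supportFunction P (t • x) = t * supportFunction P x := by
  simp only [supportFunction, real_inner_smul_left, Real.mul_iSup_of_nonneg ht]

theorem bddAbove_range_inner (hP : IsBounded P) (x : E) :
    BddAbove (range fun p : P => ⟪x, (p : E)⟫_ℝ) := by
  obtain ⟨R, hR⟩ := hP.exists_norm_le
  refine ⟨‖x‖ * R, forall_mem_range.2 fun p => ?_⟩
  exact (real_inner_le_norm x p).trans (by gcongr; exact hR p p.2)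

theorem inner_le_supportFunction (hP : IsBounded P) {p : E} (hp : p ∈ P) (x : E) :
    ⟪x, p⟫_ℝ ≤ supportFunction P x :=
  le_ciSup (bddAbove_range_inner hP x) (⟨p, hp⟩ : P)

theorem exists_supportFunction_le_mul_norm (hP : IsBounded P) :
    ∃ R, ∀ x, supportFunction P x ≤ R * ‖x‖ := by
  obtain ⟨R, hR, hPR⟩ := hP.exists_pos_norm_le
  refine ⟨R, fun x => Real.iSup_le (fun p => ?_) (by positivity)⟩
  calc ⟪x, (p : E)⟫_ℝ ≤ ‖x‖ * ‖(p : E)‖ := real_inner_le_norm x p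
    _ ≤ ‖x‖ * R := by gcongr; exact hPR p p.2
    _ = R * ‖x‖ := mul_comm _ _

theorem exists_supportFunction_lt_inner [CompleteSpace E] (hne : P.Nonempty) (hclosed : IsClosed P)
    (hconv : Convex ℝ P) {p : E} (hp : p ∉ P) : ∃ v, supportFunction P v < ⟪v, p⟫_ℝ := by
  obtain ⟨f, u, hfP, hfp⟩ := geometric_hahn_banach_closed_point hconv hclosed hp
  obtain ⟨v, rfl⟩ := (InnerProductSpace.toDual ℝ E).surjective f
  simp only [InnerProductSpace.toDual_apply_apply] at hfP hfp
  have := hne.to_subtype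
  exact ⟨v, (ciSup_le fun q : P => (hfP q q.2).le).trans_lt hfp⟩

theorem continuous_of_bddAbove_sub_supportFunction (hP : IsBounded P) {φ : E → ℝ}
    (hφ : ConvexOn ℝ univ φ) (ha : BddAbove (range fun x => φ x - supportFunction P x)) :
    Continuous φ := by
  obtain ⟨R, hR⟩ := exists_supportFunction_le_mul_norm hP
  obtain ⟨C, hC⟩ := ha
  have hle (x : E) : φ x ≤ R * ‖x‖ + C := by
    linarith [hR x, hC (mem_range_self x)]
  have hbound : Continuous fun x : E => R * ‖x‖ + C := by fun_prop
  have hlocal : (nhds (0 : E)).IsBoundedUnder (· ≤ ·) φ :=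
    (hbound.tendsto 0).isBoundedUnder_le.mono_le (.of_forall hle)
  have hcont : ContinuousOn φ univ :=
    ((hφ.continuousOn_tfae isOpen_univ univ_nonempty).out 3 1 :).1 ⟨0, mem_univ 0, hlocal⟩
  exact continuousOn_univ.1 hcont

end SupportFunction

section Conjugate

variable {E : Type*} [NormedAddCommGroup E] [InnerProductSpace ℝ E] {P : Set E} {φ : E → ℝ}

/-- The real-valued Legendre transform `p ↦ sup_x (⟪p, x⟫ - φ x)` on a real inner product space,
of which `legendre` is the case of `ℝⁿ`. Where the supremum is infinite it has the junk value `0`;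
see `convexConjugateEReal`. -/
noncomputable def convexConjugate (φ : E → ℝ) (p : E) : ℝ :=
  ⨆ x, (⟪p, x⟫_ℝ - φ x)

/-- The Legendre transform `p ↦ sup_x (⟪p, x⟫ - φ x)` on a real inner product space, with values
in the extended reals, of which `legendreE` is the case of `ℝⁿ`. -/
noncomputable def convexConjugateEReal (φ : E → ℝ) (p : E) : EReal :=
  ⨆ x, ((⟪p, x⟫_ℝ - φ x : ℝ) : EReal)

theorem neg_apply_zero_le_convexConjugate {p : E}
    (hp : BddAbove (range fun x => ⟪p, x⟫_ℝ - φ x)) : -φ 0 ≤ convexConjugate φ p :=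
  calc -φ 0 = ⟪p, 0⟫_ℝ - φ 0 := by rw [inner_zero_right, zero_sub]
    _ ≤ convexConjugate φ p := le_ciSup hp 0

theorem exists_le_inner_sub_convexConjugate [CompleteSpace E] (hφ : ConvexOn ℝ univ φ)
    (hlsc : LowerSemicontinuous φ) {x : E} {a : ℝ} (ha : a < φ x) :
    ∃ p, BddAbove (range fun y => ⟪p, y⟫_ℝ - φ y) ∧ a ≤ ⟪p, x⟫_ℝ - convexConjugate φ p := by
  obtain ⟨l, c, hle, hx⟩ := hφ.exists_affine_le_of_lt (𝕜 := ℝ) (mem_univ x) ha isClosed_univ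
    (hlsc.lowerSemicontinuousOn univ)
  obtain ⟨p, rfl⟩ := (InnerProductSpace.toDual ℝ E).surjective l
  have haffine (y : E) : ⟪p, y⟫_ℝ - φ y ≤ -c := by
    have : ⟪p, y⟫_ℝ + c ≤ φ y := by simpa using hle ⟨y, mem_univ y⟩
    linarith
  have hconj : convexConjugate φ p ≤ -c := ciSup_le haffine
  simp only [InnerProductSpace.toDual_apply_apply, RCLike.re_to_real] at hx
  exact ⟨p, ⟨-c, forall_mem_range.2 haffine⟩, by linarith⟩

theorem mem_of_bddAbove_inner_sub [CompleteSpace E] (hne : P.Nonempty) (hclosed : IsClosed P)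
    (hconv : Convex ℝ P) (ha : BddAbove (range fun x => φ x - supportFunction P x)) {p : E}
    (hp : BddAbove (range fun x => ⟪p, x⟫_ℝ - φ x)) : p ∈ P := by
  by_contra hpP
  obtain ⟨v, hv⟩ := exists_supportFunction_lt_inner hne hclosed hconv hpP
  obtain ⟨C, hC⟩ := ha
  obtain ⟨M, hM⟩ := hp
  have hray (k : ℕ) : k * (⟪v, p⟫_ℝ - supportFunction P v) ≤ M + C := by
    have hupper := hC (mem_range_self ((k : ℝ) • v))
    have hconj := hM (mem_range_self ((k : ℝ) • v))
    simp only [supportFunction_smul P k.cast_nonneg] at hupper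
    simp only [real_inner_smul_right, real_inner_comm v p] at hconj
    linarith
  obtain ⟨k, hk⟩ := exists_nat_gt ((M + C) / (⟪v, p⟫_ℝ - supportFunction P v))
  exact (hray k).not_gt ((div_lt_iff₀ (sub_pos.2 hv)).1 hk)

theorem bddAbove_inner_sub_of_mem (hP : IsBounded P)
    (hb : BddBelow (range fun x => φ x - supportFunction P x)) {p : E} (hp : p ∈ P) :
    BddAbove (range fun x => ⟪p, x⟫_ℝ - φ x) := by
  obtain ⟨m, hm⟩ := hb
  refine ⟨-m, forall_mem_range.2 fun x => ?_⟩
  have hle := inner_le_supportFunction hP hp x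
  rw [real_inner_comm] at hle
  linarith [hm (mem_range_self x)]

theorem forall_convexConjugate_le_iff (hne : P.Nonempty) (hP : IsBounded P)
    (hb : BddBelow (range fun x => φ x - supportFunction P x)) {c : ℝ} :
    (∀ p : P, convexConjugate φ p ≤ c) ↔ ∀ x, -c ≤ φ x - supportFunction P x := by
  have := hne.to_subtype
  have hconj (p : P) : convexConjugate φ p ≤ c ↔ ∀ x, ⟪(p : E), x⟫_ℝ - φ x ≤ c :=
    ciSup_le_iff (bddAbove_inner_sub_of_mem hP hb p.2)
  have hsupp (x : E) :
      -c ≤ φ x - supportFunction P x ↔ ∀ p : P, ⟪(p : E), x⟫_ℝ - φ x ≤ c := by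
    rw [le_sub_comm, supportFunction, ciSup_le_iff (bddAbove_range_inner hP x)]
    simp only [real_inner_comm, sub_neg_eq_add, sub_le_iff_le_add']
  simp only [hconj, hsupp]
  exact forall_comm

theorem forall_le_convexConjugate_iff [CompleteSpace E] (hne : P.Nonempty) (hclosed : IsClosed P)
    (hP : IsBounded P) (hconv : Convex ℝ P) (hφ : ConvexOn ℝ univ φ)
    (ha : BddAbove (range fun x => φ x - supportFunction P x))
    (hb : BddBelow (range fun x => φ x - supportFunction P x)) {c : ℝ} :
    (∀ p : P, c ≤ convexConjugate φ p) ↔ ∀ x, φ x - supportFunction P x ≤ -c := by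
  constructor
  · intro hc x
    suffices φ x ≤ supportFunction P x - c by linarith
    refine le_of_forall_lt_imp_le_of_dense fun a hax => ?_
    have hcont := continuous_of_bddAbove_sub_supportFunction hP hφ ha
    obtain ⟨p, hbdd, hap⟩ :=
      exists_le_inner_sub_convexConjugate hφ hcont.lowerSemicontinuous hax
    have hp : p ∈ P := mem_of_bddAbove_inner_sub hne hclosed hconv ha hbdd
    calc a ≤ ⟪p, x⟫_ℝ - convexConjugate φ p := hap
      _ = ⟪x, p⟫_ℝ - convexConjugate φ p := by rw [real_inner_comm]
      _ ≤ supportFunction P x - c := sub_le_sub (inner_le_supportFunction hP hp x) (hc ⟨p, hp⟩)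
  · intro hc p
    calc c ≤ -φ 0 := by simpa [supportFunction_zero, le_neg] using hc 0
      _ ≤ convexConjugate φ p :=
        neg_apply_zero_le_convexConjugate (bddAbove_inner_sub_of_mem hP hb p.2)

theorem bddAbove_range_convexConjugate (hne : P.Nonempty) (hP : IsBounded P)
    (hb : BddBelow (range fun x => φ x - supportFunction P x)) :
    BddAbove (range fun p : P => convexConjugate φ p) := by
  obtain ⟨m, hm⟩ := hb
  refine ⟨-m, forall_mem_range.2 ((forall_convexConjugate_le_iff hne hP ⟨m, hm⟩).2 fun x => ?_)⟩
  rw [neg_neg]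
  exact hm (mem_range_self x)

theorem bddBelow_range_convexConjugate (hP : IsBounded P)
    (hb : BddBelow (range fun x => φ x - supportFunction P x)) :
    BddBelow (range fun p : P => convexConjugate φ p) :=
  ⟨-φ 0, forall_mem_range.2 fun p =>
    neg_apply_zero_le_convexConjugate (bddAbove_inner_sub_of_mem hP hb p.2)⟩

theorem iInf_sub_supportFunction_eq (hne : P.Nonempty) (hP : IsBounded P)
    (hb : BddBelow (range fun x => φ x - supportFunction P x)) :
    ⨅ x, (φ x - supportFunction P x) = -⨆ p : P, convexConjugate φ p := by
  have := hne.to_subtype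
  refine eq_of_forall_le_iff fun c => ?_
  rw [le_ciInf_iff hb, le_neg, ciSup_le_iff (bddAbove_range_convexConjugate hne hP hb),
    forall_convexConjugate_le_iff hne hP hb, neg_neg]

theorem iSup_sub_supportFunction_eq [CompleteSpace E] (hne : P.Nonempty) (hclosed : IsClosed P)
    (hP : IsBounded P) (hconv : Convex ℝ P) (hφ : ConvexOn ℝ univ φ)
    (ha : BddAbove (range fun x => φ x - supportFunction P x))
    (hb : BddBelow (range fun x => φ x - supportFunction P x)) :
    ⨆ x, (φ x - supportFunction P x) = -⨅ p : P, convexConjugate φ p := by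
  have := hne.to_subtype
  refine eq_of_forall_ge_iff fun c => ?_
  rw [ciSup_le_iff ha, neg_le, le_ciInf_iff (bddBelow_range_convexConjugate hP hb),
    forall_le_convexConjugate_iff hne hclosed hP hconv hφ ha hb, neg_neg]

theorem iSup_abs_sub_supportFunction_eq [CompleteSpace E] (hne : P.Nonempty)
    (hclosed : IsClosed P) (hP : IsBounded P) (hconv : Convex ℝ P) (hφ : ConvexOn ℝ univ φ)
    (ha : BddAbove (range fun x => φ x - supportFunction P x))
    (hb : BddBelow (range fun x => φ x - supportFunction P x)) :
    ⨆ x, |φ x - supportFunction P x| = ⨆ p : P, |convexConjugate φ p| := by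
  have := hne.to_subtype
  rw [ciSup_abs_eq_max ha hb, ciSup_abs_eq_max (bddAbove_range_convexConjugate hne hP hb)
    (bddBelow_range_convexConjugate hP hb), iInf_sub_supportFunction_eq hne hP hb,
    iSup_sub_supportFunction_eq hne hclosed hP hconv hφ ha hb, neg_neg, max_comm]

theorem statement4_general [CompleteSpace E] (hne : P.Nonempty) (hclosed : IsClosed P)
    (hP : IsBounded P) (hconv : Convex ℝ P) (hφ : ConvexOn ℝ univ φ)
    (hbd : ∃ C : ℝ, ∀ x, |φ x - supportFunction P x| ≤ C) :
    (∀ p, p ∉ P → convexConjugateEReal φ p = ⊤) ∧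
    (∀ p ∈ P, convexConjugateEReal φ p = ((convexConjugate φ p : ℝ) : EReal)) ∧
    (∃ M : ℝ, ∀ p ∈ P, |convexConjugate φ p| ≤ M) ∧
    (⨆ x, (φ x - supportFunction P x)) = -(⨅ p : P, convexConjugate φ (p : E)) ∧
    (⨅ x, (φ x - supportFunction P x)) = -(⨆ p : P, convexConjugate φ (p : E)) ∧
    (⨆ x, |φ x - supportFunction P x|) = (⨆ p : P, |convexConjugate φ (p : E)|) := by
  obtain ⟨C, hC⟩ := hbd
  have ha : BddAbove (range fun x => φ x - supportFunction P x) :=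
    ⟨C, forall_mem_range.2 fun x => (abs_le.1 (hC x)).2⟩
  have hb : BddBelow (range fun x => φ x - supportFunction P x) :=
    ⟨-C, forall_mem_range.2 fun x => (abs_le.1 (hC x)).1⟩
  refine ⟨fun p hp => ?_, fun p hp => ?_, ⟨C, fun p hp => abs_le.2 ⟨?_, ?_⟩⟩,
    iSup_sub_supportFunction_eq hne hclosed hP hconv hφ ha hb,
    iInf_sub_supportFunction_eq hne hP hb,
    iSup_abs_sub_supportFunction_eq hne hclosed hP hconv hφ ha hb⟩
  · exact iSup_ereal_coe_eq_top fun h => hp (mem_of_bddAbove_inner_sub hne hclosed hconv ha h)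
  · exact (ereal_coe_ciSup (bddAbove_inner_sub_of_mem hP hb hp)).symm
  · refine (forall_le_convexConjugate_iff hne hclosed hP hconv hφ ha hb).2 (fun x => ?_) ⟨p, hp⟩
    exact (abs_le.1 (hC x)).2.trans_eq (neg_neg C).symm
  · exact (forall_convexConjugate_le_iff hne hP hb).2 (fun x => (abs_le.1 (hC x)).1) ⟨p, hp⟩

end Conjugate

/-- If `φ` is convex and `φ - φ_P` is bounded, then:
(i) `φ* = +∞` off `P`; (ii) `φ*` is finite (real-valued) and bounded on `P`;
(iii) `sup (φ - φ_P) = - inf_P φ*`; (iv) `inf (φ - φ_P) = - sup_P φ*`;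
(v) `sup |φ - φ_P| = sup_P |φ*|`. -/
theorem statement4 {n : ℕ} (P : Set (EuclideanSpace ℝ (Fin n)))
    (hPcomp : IsCompact P) (hPconv : Convex ℝ P)
    (hPint : (interior P).Nonempty)
    (φ : EuclideanSpace ℝ (Fin n) → ℝ)
    (hφconv : ConvexOn ℝ Set.univ φ)
    (hbd : ∃ C : ℝ, ∀ x, |φ x - suppFn P x| ≤ C) :
    (∀ p, p ∉ P → legendreE φ p = ⊤) ∧
    (∀ p ∈ P, legendreE φ p = ((legendre φ p : ℝ) : EReal)) ∧
    (∃ M : ℝ, ∀ p ∈ P, |legendre φ p| ≤ M) ∧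
    (⨆ x, (φ x - suppFn P x)) = -(⨅ p : P, legendre φ (p : EuclideanSpace ℝ (Fin n))) ∧
    (⨅ x, (φ x - suppFn P x)) = -(⨆ p : P, legendre φ (p : EuclideanSpace ℝ (Fin n))) ∧
    (⨆ x, |φ x - suppFn P x|) = (⨆ p : P, |legendre φ (p : EuclideanSpace ℝ (Fin n))|) := by
  exact statement4_general (hPint.mono interior_subset) hPcomp.isClosed hPcomp.isBounded
    hPconv hφconv hbd
end

section
/- Let P ⊆ ℝⁿ be a convex body and let φ : ℝⁿ → ℝ be a convex function such that φ − φ_P is bounded on ℝⁿ. Then: (i) for every x ∈ ℝⁿ, every subgradient p of φ at x lies in P, and moreover φ*(p) = ⟨p, x⟩ − φ(x); (ii) for every point p in the interior of P, the supremum defining φ*(p) is attained at some point x_p ∈ ℝⁿ, and p is a subgradient of φ at x_p; in particular the interior of P is contained in the image of the subdifferential map of φ. -/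
open scoped InnerProductSpace
open MeasureTheory

/-- `p` is a subgradient of `φ` at `x`: `φ(y) ≥ φ(x) + ⟨p, y - x⟩` for all `y`. -/
def IsSubgradAt {n : ℕ} (φ : EuclideanSpace ℝ (Fin n) → ℝ)
    (p x : EuclideanSpace ℝ (Fin n)) : Prop :=
  ∀ y, φ x + ⟪p, y - x⟫_ℝ ≤ φ y

open Filter Metric

/-!
A subgradient `p` of `φ` at `x` makes the affine function `φ x + ⟪p, y - x⟫` a minorant of `φ`,
hence of `φ_P` up to a constant. Along each ray `φ_P` is linear, so the constant disappears in the
limit and `⟪p, ·⟫ ≤ φ_P`; by Hahn–Banach this forces `p ∈ P`. Conversely, if the ball of radius `r`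
around `p` lies in `P`, then `φ_P x - ⟪p, x⟫ ≥ r ‖x‖`, so `φ - ⟪p, ·⟫` is coercive and attains its
minimum; a minimiser is exactly a point at which `p` is a subgradient.
-/

section InnerProductSpace

variable {E : Type*} [NormedAddCommGroup E] [InnerProductSpace ℝ E]

theorem mem_of_forall_inner_le_iSup [CompleteSpace E] {P : Set E} (hclosed : IsClosed P)
    (hconv : Convex ℝ P) (hne : P.Nonempty) {p : E}
    (hp : ∀ v, ⟪v, p⟫_ℝ ≤ ⨆ q : P, ⟪v, (q : E)⟫_ℝ) : p ∈ P := by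
  by_contra hpP
  have : Nonempty P := hne.to_subtype
  obtain ⟨f, u, hfu, hup⟩ := geometric_hahn_banach_closed_point hconv hclosed hpP
  obtain ⟨v, rfl⟩ := (InnerProductSpace.toDual ℝ E).surjective f
  simp only [InnerProductSpace.toDual_apply_apply] at hfu hup
  have hsup : ⨆ q : P, ⟪v, (q : E)⟫_ℝ ≤ u := ciSup_le fun q ↦ (hfu q q.2).le
  exact ((hp v).trans hsup).not_gt hup

theorem inner_add_mul_norm_le_of_forall_mem_closedBall {p x : E} {r c : ℝ} (hr : 0 ≤ r)
    (h : ∀ q ∈ closedBall p r, ⟪x, q⟫_ℝ ≤ c) : ⟪x, p⟫_ℝ + r * ‖x‖ ≤ c := by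
  rcases eq_or_ne x 0 with rfl | hx
  · simpa using h p (mem_closedBall_self hr)
  have hx' : ‖x‖ ≠ 0 := norm_ne_zero_iff.2 hx
  have hmem : p + (r / ‖x‖) • x ∈ closedBall p r := by
    rw [mem_closedBall, dist_self_add_left, norm_smul, norm_div, norm_norm,
      Real.norm_of_nonneg hr, div_mul_cancel₀ r hx']
  calc ⟪x, p⟫_ℝ + r * ‖x‖ = ⟪x, p + (r / ‖x‖) • x⟫_ℝ := by
        rw [inner_add_right, real_inner_smul_right, real_inner_self_eq_norm_sq]
        field_simp
    _ ≤ c := h _ hmem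

end InnerProductSpace

theorem exists_forall_le_of_lowerSemicontinuous_of_tendsto_cocompact {X β : Type*}
    [TopologicalSpace X] [Nonempty X] [LinearOrder β] [NoMaxOrder β] {f : X → β}
    (hf : LowerSemicontinuous f) (hlim : Tendsto f (cocompact X) atTop) :
    ∃ x, ∀ y, f x ≤ f y := by
  obtain ⟨x₀⟩ := ‹Nonempty X›
  obtain ⟨K, hK, hlarge⟩ := mem_cocompact.1 (hlim.eventually_gt_atTop (f x₀))
  have hx₀ : x₀ ∈ K := by_contra fun h ↦ lt_irrefl (f x₀) (hlarge h)
  obtain ⟨x, -, hmin⟩ := (hf.lowerSemicontinuousOn K).exists_isMinOn ⟨x₀, hx₀⟩ hK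
  refine ⟨x, fun y ↦ ?_⟩
  by_cases hy : y ∈ K
  · exact hmin hy
  · exact (hmin hx₀).trans (hlarge hy).le

section SupportFunction

variable {n : ℕ} {P : Set (EuclideanSpace ℝ (Fin n))} {φ : EuclideanSpace ℝ (Fin n) → ℝ}
  {p x : EuclideanSpace ℝ (Fin n)} {C : ℝ}

theorem suppFn_smul_of_nonneg {t : ℝ} (ht : 0 ≤ t) : suppFn P (t • x) = t * suppFn P x := by
  simp only [suppFn, real_inner_smul_left, Real.mul_iSup_of_nonneg ht]

theorem inner_le_suppFn (hP : Bornology.IsBounded P) (hp : p ∈ P) : ⟪x, p⟫_ℝ ≤ suppFn P x := by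
  have hbdd : BddAbove ((fun q ↦ ⟪x, q⟫_ℝ) '' P) :=
    ((innerSL ℝ x).lipschitz.isBounded_image hP).bddAbove
  rw [Set.image_eq_range] at hbdd
  exact le_ciSup hbdd ⟨p, hp⟩

theorem isSubgradAt_iff_forall_inner_sub_le :
    IsSubgradAt φ p x ↔ ∀ y, ⟪p, y⟫_ℝ - φ y ≤ ⟪p, x⟫_ℝ - φ x := by
  refine forall_congr' fun y ↦ ?_
  rw [inner_sub_right]
  constructor <;> intro h <;> linarith

theorem IsSubgradAt.legendre_eq (h : IsSubgradAt φ p x) : legendre φ p = ⟪p, x⟫_ℝ - φ x :=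
  have hmax : IsGreatest (Set.range fun y ↦ ⟪p, y⟫_ℝ - φ y) (⟪p, x⟫_ℝ - φ x) :=
    ⟨Set.mem_range_self x, Set.forall_mem_range.2 (isSubgradAt_iff_forall_inner_sub_le.1 h)⟩
  hmax.csSup_eq

theorem IsSubgradAt.inner_le_suppFn (h : IsSubgradAt φ p x) (hφ : ∀ y, φ y ≤ suppFn P y + C)
    (v : EuclideanSpace ℝ (Fin n)) : ⟪v, p⟫_ℝ ≤ suppFn P v := by
  have hray (t : ℝ) (ht : 0 ≤ t) : t * (⟪v, p⟫_ℝ - suppFn P v) ≤ C + (⟪p, x⟫_ℝ - φ x) := by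
    have hminorant := (h (t • v)).trans (hφ (t • v))
    rw [suppFn_smul_of_nonneg ht, inner_sub_right, real_inner_smul_right,
      real_inner_comm] at hminorant
    linarith
  by_contra! hlt
  obtain ⟨k, hk⟩ := exists_lt_nsmul (sub_pos.2 hlt) (C + (⟪p, x⟫_ℝ - φ x))
  rw [nsmul_eq_mul] at hk
  exact (hray k k.cast_nonneg).not_gt hk

theorem IsSubgradAt.mem_of_le_suppFn_add (h : IsSubgradAt φ p x) (hclosed : IsClosed P)
    (hconv : Convex ℝ P) (hne : P.Nonempty) (hφ : ∀ y, φ y ≤ suppFn P y + C) : p ∈ P :=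
  mem_of_forall_inner_le_iSup hclosed hconv hne (h.inner_le_suppFn hφ)

theorem tendsto_sub_inner_cocompact_atTop (hP : Bornology.IsBounded P)
    (hφ : ∀ y, suppFn P y - C ≤ φ y) (hp : p ∈ interior P) :
    Tendsto (fun y ↦ φ y - ⟪p, y⟫_ℝ) (cocompact _) atTop := by
  obtain ⟨r, hr, hball⟩ := nhds_basis_closedBall.mem_iff.1 (mem_interior_iff_mem_nhds.1 hp)
  have hgrowth (y) : r * ‖y‖ - C ≤ φ y - ⟪p, y⟫_ℝ := by
    have hsupp : ⟪y, p⟫_ℝ + r * ‖y‖ ≤ suppFn P y :=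
      inner_add_mul_norm_le_of_forall_mem_closedBall hr.le fun q hq ↦
        inner_le_suppFn hP (hball hq)
    rw [real_inner_comm] at hsupp
    linarith [hφ y]
  exact tendsto_atTop_mono hgrowth <|
    tendsto_atTop_add_const_right _ (-C) (tendsto_norm_cocompact_atTop.const_mul_atTop hr)

theorem exists_isSubgradAt_of_mem_interior (hP : Bornology.IsBounded P)
    (hlsc : LowerSemicontinuous φ) (hφ : ∀ y, suppFn P y - C ≤ φ y) (hp : p ∈ interior P) :
    ∃ x, IsSubgradAt φ p x := by
  have hlsc_sub : LowerSemicontinuous fun y ↦ φ y - ⟪p, y⟫_ℝ := by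
    simp only [sub_eq_add_neg]
    exact hlsc.add (by fun_prop : Continuous fun y ↦ -⟪p, y⟫_ℝ).lowerSemicontinuous
  obtain ⟨x, hmin⟩ := exists_forall_le_of_lowerSemicontinuous_of_tendsto_cocompact hlsc_sub
    (tendsto_sub_inner_cocompact_atTop hP hφ hp)
  exact ⟨x, isSubgradAt_iff_forall_inner_sub_le.2 fun y ↦ by linarith [hmin y]⟩

end SupportFunction

theorem statement5_general {n : ℕ} (P : Set (EuclideanSpace ℝ (Fin n)))
    (hPcomp : IsCompact P) (hPconv : Convex ℝ P) (hPne : P.Nonempty)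
    (φ : EuclideanSpace ℝ (Fin n) → ℝ) (hφlsc : LowerSemicontinuous φ)
    (hbd : ∃ C : ℝ, ∀ x, |φ x - suppFn P x| ≤ C) :
    (∀ x p, IsSubgradAt φ p x →
      p ∈ P ∧ legendre φ p = ⟪p, x⟫_ℝ - φ x) ∧
    (∀ p ∈ interior P, ∃ x_p,
      (∀ x, ⟪p, x⟫_ℝ - φ x ≤ ⟪p, x_p⟫_ℝ - φ x_p) ∧ IsSubgradAt φ p x_p) ∧
    interior P ⊆ {p | ∃ x, IsSubgradAt φ p x} := by
  obtain ⟨C, hC⟩ := hbd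
  have hupper (y) : φ y ≤ suppFn P y + C := by linarith [(abs_le.1 (hC y)).2]
  have hlower (y) : suppFn P y - C ≤ φ y := by linarith [(abs_le.1 (hC y)).1]
  have hsurj (p) (hp : p ∈ interior P) : ∃ x, IsSubgradAt φ p x :=
    exists_isSubgradAt_of_mem_interior hPcomp.isBounded hφlsc hlower hp
  refine ⟨fun x p h ↦ ⟨h.mem_of_le_suppFn_add hPcomp.isClosed hPconv hPne hupper, h.legendre_eq⟩,
    fun p hp ↦ ?_, hsurj⟩
  obtain ⟨x, hx⟩ := hsurj p hp
  exact ⟨x, isSubgradAt_iff_forall_inner_sub_le.1 hx, hx⟩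

/-- Let `φ` be convex with `φ - φ_P` bounded. (i) Every
subgradient `p` of `φ` at some point `x` lies in `P` and `φ*(p) = ⟨p,x⟩ - φ(x)`;
(ii) for every `p` in the interior of `P` the sup defining `φ*(p)` is attained
at some `x_p`, and `p` is a subgradient of `φ` at `x_p`; in particular the
interior of `P` is contained in the image of the subdifferential of `φ`. -/
theorem statement5 {n : ℕ} (P : Set (EuclideanSpace ℝ (Fin n)))
    (hPcomp : IsCompact P) (hPconv : Convex ℝ P)
    (hPint : (interior P).Nonempty)
    (φ : EuclideanSpace ℝ (Fin n) → ℝ)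
    (hφconv : ConvexOn ℝ Set.univ φ)
    (hbd : ∃ C : ℝ, ∀ x, |φ x - suppFn P x| ≤ C) :
    (∀ x p, IsSubgradAt φ p x →
      p ∈ P ∧ legendre φ p = ⟪p, x⟫_ℝ - φ x) ∧
    (∀ p ∈ interior P, ∃ x_p,
      (∀ x, ⟪p, x⟫_ℝ - φ x ≤ ⟪p, x_p⟫_ℝ - φ x_p) ∧ IsSubgradAt φ p x_p) ∧
    interior P ⊆ {p | ∃ x, IsSubgradAt φ p x} :=
  statement5_general P hPcomp hPconv (hPint.mono interior_subset) φ
    (continuousOn_univ.1 (hφconv.continuousOn isOpen_univ)).lowerSemicontinuous hbd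
end

section
/- Let P ⊆ ℝⁿ be a convex body. Every sequence (φ_j) of convex functions ℝⁿ → ℝ satisfying φ_j(0) = 0 and φ_j ≤ φ_P on ℝⁿ admits a subsequence that converges uniformly on every compact subset of ℝⁿ to a convex function φ : ℝⁿ → ℝ with φ(0) = 0 and φ ≤ φ_P. -/
open scoped InnerProductSpace
open MeasureTheory

/-!
A finite-valued upper bound already forces compactness: in finite dimension every point has a
simplex as a neighbourhood, and a convex function on a simplex is at most its largest vertex value,
so convex functions that are pointwise bounded above are locally uniformly bounded above.
Reflecting in a point turns a lower bound there into one nearby, and a bounded convex function is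
Lipschitz on a smaller ball with a constant depending only on the bound. Hence the family is
equicontinuous and Arzelà–Ascoli applies; convexity, being a closed condition, passes to the limit.
-/

section

open Filter Metric Set Topology

lemma two_mul_midpoint_le_of_convexOn {E : Type*} [AddCommGroup E] [Module ℝ E] {C : Set E}
    {f : E → ℝ} (hf : ConvexOn ℝ C f) {x y : E} (hx : x ∈ C) (hy : y ∈ C) :
    2 * f (midpoint ℝ x y) ≤ f x + f y := by
  have half_nonneg : (0 : ℝ) ≤ ⅟2 := by norm_num
  have hmid := hf.2 hx hy half_nonneg half_nonneg (by norm_num)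
  rw [← smul_add, ← midpoint_eq_smul_add, invOf_eq_inv, smul_eq_mul, smul_eq_mul] at hmid
  linarith

variable {E ι : Type*} [NormedAddCommGroup E] [NormedSpace ℝ E] [FiniteDimensional ℝ E]
  {F : ι → E → ℝ} {C : Set E} {x₀ : E}

lemma exists_eventually_forall_le_of_convexOn (hF : ∀ i, ConvexOn ℝ C (F i)) (hC : C ∈ 𝓝 x₀)
    (habove : ∀ x ∈ C, BddAbove (range fun i => F i x)) :
    ∃ M, ∀ᶠ x in 𝓝 x₀, ∀ i, F i x ≤ M := by
  obtain ⟨b, hx₀, hbC⟩ := exists_mem_interior_convexHull_affineBasis hC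
  have hvertex : ∀ k, b k ∈ C := fun k => hbC (subset_convexHull ℝ _ (mem_range_self k))
  choose B hB using fun k => habove (b k) (hvertex k)
  obtain ⟨M, hM⟩ := (finite_range B).bddAbove
  refine ⟨M, mem_of_superset (mem_interior_iff_mem_nhds.1 hx₀) fun x hx i => ?_⟩
  obtain ⟨_, ⟨k, rfl⟩, hxk⟩ :=
    (hF i).exists_ge_of_mem_convexHull (range_subset_iff.2 hvertex) hx
  exact hxk.trans ((hB k (mem_range_self i)).trans (hM (mem_range_self k)))

lemma exists_ball_forall_abs_le_of_convexOn (hF : ∀ i, ConvexOn ℝ C (F i)) (hC : C ∈ 𝓝 x₀)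
    (habove : ∀ x ∈ C, BddAbove (range fun i => F i x))
    (hbelow : BddBelow (range fun i => F i x₀)) :
    ∃ r > 0, ball x₀ r ⊆ C ∧ ∃ M, ∀ i, ∀ x ∈ ball x₀ r, |F i x| ≤ M := by
  obtain ⟨u, hu⟩ := exists_eventually_forall_le_of_convexOn hF hC habove
  obtain ⟨l, hl⟩ := hbelow
  obtain ⟨r, hr, hball⟩ := Metric.mem_nhds_iff.1 (inter_mem hC hu)
  refine ⟨r, hr, fun x hx => (hball hx).1, max u (u - 2 * l), fun i x hx => ?_⟩
  set y := Equiv.pointReflection x₀ x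
  have hy : y ∈ ball x₀ r := by
    rwa [mem_ball, dist_pointReflection_left, dist_comm]
  have hmid : 2 * F i x₀ ≤ F i x + F i y := by
    simpa [y] using two_mul_midpoint_le_of_convexOn (hF i) (hball hx).1 (hball hy).1
  have hxu : F i x ≤ u := (hball hx).2 i
  have hyu : F i y ≤ u := (hball hy).2 i
  have hlx₀ : l ≤ F i x₀ := hl (mem_range_self i)
  rw [abs_le']
  exact ⟨le_max_of_le_left hxu, le_max_of_le_right (by linarith)⟩

lemma equicontinuousAt_of_convexOn (hF : ∀ i, ConvexOn ℝ C (F i)) (hC : C ∈ 𝓝 x₀)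
    (habove : ∀ x ∈ C, BddAbove (range fun i => F i x))
    (hbelow : BddBelow (range fun i => F i x₀)) :
    EquicontinuousAt F x₀ := by
  obtain ⟨r, hr, hball, M, hM⟩ := exists_ball_forall_abs_le_of_convexOn hF hC habove hbelow
  have hlip : ∀ i, LipschitzOnWith (2 * M / (r / 2)).toNNReal (F i) (ball x₀ (r - r / 2)) :=
    fun i => ((hF i).subset hball (convex_ball x₀ r)).lipschitzOnWith_of_abs_le (half_pos hr) (hM i)
  have hx₀ : ball x₀ (r - r / 2) ∈ 𝓝 x₀ := ball_mem_nhds x₀ (by linarith)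
  have hequi := (LipschitzOnWith.uniformEquicontinuousOn F _ hlip).equicontinuousOn x₀
    (mem_of_mem_nhds hx₀)
  rwa [EquicontinuousWithinAt, nhdsWithin_eq_nhds.2 hx₀] at hequi

lemma isCompact_setOfPred_convexOn_mem_Icc (l u : E → ℝ) :
    IsCompact {f : C(E, ℝ) | ConvexOn ℝ univ f ∧ ⇑f ∈ Icc l u} := by
  refine ArzelaAscoli.isCompact_of_equicontinuous _ ?_ fun x => ?_
  · have himage : ContinuousMap.toFun '' {f : C(E, ℝ) | ConvexOn ℝ univ f ∧ ⇑f ∈ Icc l u} =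
        {f : E → ℝ | ConvexOn ℝ univ f} ∩ Icc l u :=
      Subset.antisymm (image_subset_iff.2 fun _ hf => hf)
        fun f hf => ⟨⟨f, hf.1.locallyLipschitz.continuous⟩, hf, rfl⟩
    rw [himage]
    exact isCompact_Icc.inter_left isClosed_setOfPred_convexOn
  · exact equicontinuousAt_of_convexOn (fun f => f.2.1) univ_mem
      (fun y _ => ⟨u y, forall_mem_range.2 fun f => f.2.2.2 y⟩)
      ⟨l x, forall_mem_range.2 fun f => f.2.2.1 x⟩

theorem statement8_general {h : E → ℝ} {φ : ℕ → E → ℝ}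
    (hconv : ∀ j, ConvexOn ℝ univ (φ j)) (h0 : ∀ j, φ j 0 = 0)
    (hub : ∀ j x, φ j x ≤ h x) :
    ∃ σ : ℕ → ℕ, StrictMono σ ∧
      ∃ ψ : E → ℝ, ConvexOn ℝ univ ψ ∧ ψ 0 = 0 ∧ (∀ x, ψ x ≤ h x) ∧
        ∀ K : Set E, IsCompact K → TendstoUniformlyOn (fun j => φ (σ j)) ψ atTop K := by
  have hlb : ∀ j x, -h (-x) ≤ φ j x := fun j x => by
    have hmid := two_mul_midpoint_le_of_convexOn (hconv j) (mem_univ x) (mem_univ (-x))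
    rw [midpoint_self_neg, h0] at hmid
    linarith [hub j (-x)]
  let Φ : ℕ → C(E, ℝ) := fun j => ⟨φ j, (hconv j).locallyLipschitz.continuous⟩
  obtain ⟨ψ, ⟨hψconv, -, hψub⟩, σ, hσ, hlim⟩ :=
    (isCompact_setOfPred_convexOn_mem_Icc (fun x => -h (-x)) h).tendsto_subseq (x := Φ)
      fun j => ⟨hconv j, hlb j, hub j⟩
  have hψ0 : ψ 0 = 0 := by
    have hlim0 : Tendsto (fun j => φ (σ j) 0) atTop (𝓝 (ψ 0)) :=
      ((continuous_eval_const (0 : E)).tendsto ψ).comp hlim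
    simp only [h0] at hlim0
    exact tendsto_nhds_unique hlim0 tendsto_const_nhds
  exact ⟨σ, hσ, ψ, hψconv, hψ0, hψub,
    ContinuousMap.tendsto_iff_forall_isCompact_tendstoUniformlyOn.1 hlim⟩

end

/-- Any sequence of convex functions `φ_j` with `φ_j(0) = 0`
and `φ_j ≤ φ_P` admits a subsequence converging uniformly on every compact set
to a convex function `ψ` with `ψ(0) = 0` and `ψ ≤ φ_P`. -/
theorem statement8 {n : ℕ} (P : Set (EuclideanSpace ℝ (Fin n)))
    (hPcomp : IsCompact P) (hPconv : Convex ℝ P)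
    (hPint : (interior P).Nonempty)
    (φ : ℕ → EuclideanSpace ℝ (Fin n) → ℝ)
    (hconv : ∀ j, ConvexOn ℝ Set.univ (φ j))
    (h0 : ∀ j, φ j 0 = 0)
    (hub : ∀ j x, φ j x ≤ suppFn P x) :
    ∃ σ : ℕ → ℕ, StrictMono σ ∧
      ∃ ψ : EuclideanSpace ℝ (Fin n) → ℝ,
        ConvexOn ℝ Set.univ ψ ∧ ψ 0 = 0 ∧ (∀ x, ψ x ≤ suppFn P x) ∧
        ∀ K : Set (EuclideanSpace ℝ (Fin n)), IsCompact K →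
          TendstoUniformlyOn (fun j => φ (σ j)) ψ Filter.atTop K :=
  statement8_general hconv h0 hub
end

section
/- Let G₀ : ℝⁿ → ℝ be an upper semicontinuous function such that G₀(x) → −∞ as ‖x‖ → ∞ and such that G₀ attains its supremum at a unique point x₀ ∈ ℝⁿ. Let v : ℝⁿ → ℝ be a bounded continuous function. Then the function g(t) := sup_{x ∈ ℝⁿ} (G₀(x) + t·v(x)) is differentiable at t = 0 and g'(0) = v(x₀). -/
open scoped InnerProductSpace
open MeasureTheory

/-!
Upper semicontinuity on compact sets and the behaviour at infinity force a uniform gap between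
`G₀ x₀` and the values of `G₀` outside any neighbourhood of `x₀`. Since `v` is bounded, a small `t`
cannot bridge this gap, so only points `x` with `v x` close to `v x₀` compete in the supremum, and
these contribute at most `G₀ x₀ + t * v x₀ + c * |t|`. Testing at `x₀` gives the lower bound
`G₀ x₀ + t * v x₀`.
-/

section

open Filter Set
open scoped Topology

theorem hasDerivAt_of_eventually_le_of_eventually_le {f : ℝ → ℝ} {a m : ℝ}
    (hlower : ∀ᶠ t in 𝓝 a, f a + (t - a) * m ≤ f t)
    (hupper : ∀ c > 0, ∀ᶠ t in 𝓝 a, f t ≤ f a + (t - a) * m + c * |t - a|) :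
    HasDerivAt f m a := by
  rw [hasDerivAt_iff_isLittleO, Asymptotics.isLittleO_iff]
  intro c hc
  filter_upwards [hlower, hupper c hc] with t hlow hup
  rw [smul_eq_mul, Real.norm_eq_abs, Real.norm_eq_abs, abs_of_nonneg (by linarith)]
  linarith

theorem bddAbove_range_add_mul {ι : Type*} {G v : ι → ℝ} {M : ℝ} (hG : BddAbove (range G))
    (hM : ∀ x, |v x| ≤ M) (t : ℝ) : BddAbove (range fun x => G x + t * v x) := by
  have htv : BddAbove (range fun x => t * v x) := by
    refine ⟨|t| * M, forall_mem_range.2 fun x => ?_⟩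
    calc t * v x ≤ |t| * |v x| := (le_abs_self _).trans_eq (abs_mul _ _)
      _ ≤ |t| * M := by gcongr; exact hM x
  exact hG.range_add htv

variable {X : Type*} [TopologicalSpace X] {G v : X → ℝ} {x₀ : X}

theorem exists_lt_forall_le_of_isCompact {β : Type*} [LinearOrder β] [NoMinOrder β] {f : X → β}
    {K : Set X} {b : β} (hK : IsCompact K) (hf : UpperSemicontinuousOn f K)
    (hlt : ∀ x ∈ K, f x < b) : ∃ a < b, ∀ x ∈ K, f x ≤ a := by
  rcases K.eq_empty_or_nonempty with rfl | hne
  · obtain ⟨a, ha⟩ := exists_lt b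
    exact ⟨a, ha, fun x hx => hx.elim⟩
  · obtain ⟨y, hy, hmax⟩ := hf.exists_isMaxOn hne hK
    exact ⟨f y, hlt y hy, fun x hx => hmax hx⟩

/-- Tykhonov well-posedness of the problem of maximizing `G`, with solution `x₀`: the point `x₀` is
a maximizer, and every maximizing sequence or net converges to it. The convergence is encoded as a
uniform gap below the maximal value outside each neighbourhood of `x₀`. -/
structure IsWellPosedMaximizer (G : X → ℝ) (x₀ : X) : Prop where
  le_apply : ∀ x, G x ≤ G x₀
  exists_gap : ∀ U ∈ 𝓝 x₀, ∃ a < G x₀, ∀ x ∉ U, G x ≤ a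

theorem IsWellPosedMaximizer.of_upperSemicontinuous (hG : UpperSemicontinuous G)
    (hinf : ∃ a < G x₀, ∀ᶠ x in cocompact X, G x ≤ a) (hmax : ∀ x, G x ≤ G x₀)
    (huniq : ∀ x, G x = G x₀ → x = x₀) : IsWellPosedMaximizer G x₀ where
  le_apply := hmax
  exists_gap U hU := by
    obtain ⟨a, ha, hGa⟩ := hinf
    obtain ⟨K, hK, hGK⟩ := mem_cocompact.1 hGa
    have hlt : ∀ x ∈ K \ interior U, G x < G x₀ := fun x hx =>
      (hmax x).lt_of_ne fun h => hx.2 (huniq x h ▸ mem_interior_iff_mem_nhds.2 hU)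
    obtain ⟨b, hb, hGb⟩ := exists_lt_forall_le_of_isCompact (hK.diff isOpen_interior)
      (hG.upperSemicontinuousOn _) hlt
    refine ⟨max a b, max_lt ha hb, fun x hxU => ?_⟩
    by_cases hxK : x ∈ K
    · exact (hGb x ⟨hxK, fun hx => hxU (interior_subset hx)⟩).trans (le_max_right a b)
    · exact (hGK hxK : G x ≤ a).trans (le_max_left a b)

namespace IsWellPosedMaximizer

theorem bddAbove_range (hx₀ : IsWellPosedMaximizer G x₀) : BddAbove (range G) :=
  ⟨G x₀, forall_mem_range.2 hx₀.le_apply⟩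

theorem eventually_forall_add_mul_le {M c : ℝ} (hx₀ : IsWellPosedMaximizer G x₀)
    (hv : ContinuousAt v x₀) (hM : ∀ x, |v x| ≤ M) (hc : 0 < c) :
    ∀ᶠ t in 𝓝 (0 : ℝ), ∀ x, G x + t * v x ≤ G x₀ + t * v x₀ + c * |t| := by
  obtain ⟨a, ha, hgap⟩ := hx₀.exists_gap _ (hv (Metric.ball_mem_nhds (v x₀) hc))
  have htendsto : Tendsto (fun t : ℝ => |t| * (M + M)) (𝓝 0) (𝓝 0) :=
    (by fun_prop : Continuous fun t : ℝ => |t| * (M + M)).tendsto' 0 0 (by simp)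
  filter_upwards [htendsto.eventually_le_const (sub_pos.2 ha)] with t ht x
  suffices G x + |t| * |v x - v x₀| ≤ G x₀ + c * |t| by
    have : t * (v x - v x₀) ≤ |t| * |v x - v x₀| := (le_abs_self _).trans_eq (abs_mul _ _)
    linarith
  by_cases hx : |v x - v x₀| < c
  · calc G x + |t| * |v x - v x₀| ≤ G x₀ + |t| * c := by gcongr; exact hx₀.le_apply x
      _ = G x₀ + c * |t| := by rw [mul_comm]
  · have hosc : |v x - v x₀| ≤ M + M := (abs_sub _ _).trans (add_le_add (hM x) (hM x₀))
    calc G x + |t| * |v x - v x₀| ≤ a + |t| * (M + M) := by gcongr; exact hgap x hx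
      _ ≤ G x₀ := by linarith
      _ ≤ G x₀ + c * |t| := le_add_of_nonneg_right (by positivity)

theorem hasDerivAt_iSup_add_mul {M : ℝ} (hx₀ : IsWellPosedMaximizer G x₀)
    (hv : ContinuousAt v x₀) (hM : ∀ x, |v x| ≤ M) :
    HasDerivAt (fun t : ℝ => ⨆ x, (G x + t * v x)) (v x₀) 0 := by
  have : Nonempty X := ⟨x₀⟩
  have hlower (t : ℝ) : G x₀ + t * v x₀ ≤ ⨆ x, (G x + t * v x) :=
    le_ciSup (bddAbove_range_add_mul hx₀.bddAbove_range hM t) x₀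
  have hzero : ⨆ x, (G x + 0 * v x) = G x₀ :=
    le_antisymm (ciSup_le fun x => by simpa using hx₀.le_apply x) (by simpa using hlower 0)
  apply hasDerivAt_of_eventually_le_of_eventually_le
  · simpa only [hzero, sub_zero] using Eventually.of_forall hlower
  · intro c hc
    filter_upwards [hx₀.eventually_forall_add_mul_le hv hM hc] with t ht
    simpa only [hzero, sub_zero] using ciSup_le ht

end IsWellPosedMaximizer

theorem statement10_general (hG : UpperSemicontinuous G)
    (hinf : ∃ a < G x₀, ∀ᶠ x in cocompact X, G x ≤ a) (hmax : ∀ x, G x ≤ G x₀)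
    (huniq : ∀ x, G x = G x₀ → x = x₀) (hv : ContinuousAt v x₀) (hvb : ∃ M, ∀ x, |v x| ≤ M) :
    HasDerivAt (fun t : ℝ => ⨆ x, (G x + t * v x)) (v x₀) 0 := by
  obtain ⟨M, hM⟩ := hvb
  have hx₀ := IsWellPosedMaximizer.of_upperSemicontinuous hG hinf hmax huniq
  exact hx₀.hasDerivAt_iSup_add_mul hv hM

end

/-- If `G₀` is upper semicontinuous, tends to `-∞` at
infinity and has a unique maximizer `x₀`, and `v` is bounded and continuous,
then `g(t) := sup_x (G₀(x) + t v(x))` is differentiable at `t = 0` with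
`g'(0) = v(x₀)`. -/
theorem statement10 {n : ℕ} (G₀ : EuclideanSpace ℝ (Fin n) → ℝ)
    (husc : UpperSemicontinuous G₀)
    (hproper : Filter.Tendsto G₀ (Filter.cocompact (EuclideanSpace ℝ (Fin n))) Filter.atBot)
    (x₀ : EuclideanSpace ℝ (Fin n))
    (hmax : ∀ x, G₀ x ≤ G₀ x₀)
    (huniq : ∀ x, G₀ x = G₀ x₀ → x = x₀)
    (v : EuclideanSpace ℝ (Fin n) → ℝ)
    (hv : Continuous v) (hvb : ∃ M : ℝ, ∀ x, |v x| ≤ M) :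
    HasDerivAt (fun t : ℝ => ⨆ x, (G₀ x + t * v x)) (v x₀) 0 :=
  statement10_general husc ⟨_, sub_one_lt _, hproper.eventually_le_atBot _⟩ hmax huniq
    hv.continuousAt hvb
end
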